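/- arXiv:1810.07499 — 2 statements merged into one kernel-verified Lean document; each statement's English description precedes it below -/
import Mathlib

section
/- There exists a constant c > 0 such that for every x ∈ ℝ^N: |𝓛Φ(x)| ≤ c Φ(x), |∇Φ(x)| ≤ c Φ(x), and |∇(𝓛Φ)(x)| ≤ c Φ(x). (Here Φ is strictly positive.) -/
open MeasureTheory Metric Real Set
open scoped InnerProductSpace ENNReal

noncomputable section

/-- `ℝ^n` as a Euclidean space. -/
abbrev Eu (n : ℕ) := EuclideanSpace ℝ (Fin n)

/-- The heat-kernel profile `Ψ_n` of the fractional Laplacian `(−Δ)^{σ/2}` in `ℝ^n`: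
`Ψ_n(w) = (2π)^{−n} ∫_{ℝ^n} e^{−|ξ|^σ} e^{i w·ξ} dξ`. -/
def Psi (n : ℕ) (σ : ℝ) (w : Eu n) : ℝ :=
  (2 * π) ^ (-(n : ℝ)) *
    (∫ ξ : Eu n, ((Real.exp (-‖ξ‖ ^ σ) : ℝ) : ℂ) *
      Complex.exp (Complex.I * (⟪w, ξ⟫_ℝ : ℂ))).re

/-- `LΨ_n`, the inverse Fourier transform of `|ξ|^σ e^{−|ξ|^σ}`. -/
def LPsi (n : ℕ) (σ : ℝ) (w : Eu n) : ℝ :=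
  (2 * π) ^ (-(n : ℝ)) *
    (∫ ξ : Eu n, ((‖ξ‖ ^ σ * Real.exp (-‖ξ‖ ^ σ) : ℝ) : ℂ) *
      Complex.exp (Complex.I * (⟪w, ξ⟫_ℝ : ℂ))).re

/-- `ℝ^N = ℝ^{n₁} × ⋯ × ℝ^{n_M}` (with the Euclidean norm), `N = n₁ + ⋯ + n_M`. -/
abbrev XSp {M : ℕ} (n : Fin M → ℕ) := PiLp 2 (fun k => Eu (n k))

/-- The heat-kernel profile `Φ(x) = ∏_k Ψ_{n_k}(x^k)` of `𝓛 = Σ_k (−Δ_{x^k})^{σ/2}`. -/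
def PhiProd {M : ℕ} (n : Fin M → ℕ) (σ : ℝ) (x : XSp n) : ℝ :=
  ∏ k, Psi (n k) σ (x k)

/-- `𝓛Φ(x) = Σ_k (LΨ_{n_k})(x^k) ∏_{i≠k} Ψ_{n_i}(x^i)`. -/
def LPhiProd {M : ℕ} (n : Fin M → ℕ) (σ : ℝ) (x : XSp n) : ℝ :=
  ∑ k, LPsi (n k) σ (x k) * ∏ i ∈ Finset.univ.erase k, Psi (n i) σ (x i)

open Filter Topology

/-- Functions `t ↦ ∫ y ^ t dν(y)` of a probability measure `ν` on `[0, 1]`. -/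
def IsMomentFunction (f : ℝ → ℝ) : Prop :=
  ∃ ν : ProbabilityMeasure unitInterval, ∀ t, 0 < t →
    ∫ y : unitInterval, (y : ℝ) ^ t ∂(ν : Measure unitInterval) = f t

lemma continuous_unitInterval_rpow {t : ℝ} (ht : 0 < t) :
    Continuous fun y : unitInterval => (y : ℝ) ^ t :=
  continuous_subtype_val.rpow_const fun _ => Or.inr ht.le

lemma IsMomentFunction.mul {f g : ℝ → ℝ} (hf : IsMomentFunction f) (hg : IsMomentFunction g) :
    IsMomentFunction fun t => f t * g t := by
  obtain ⟨ν, hν⟩ := hf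
  obtain ⟨ρ, hρ⟩ := hg
  have hm : Measurable fun p : unitInterval × unitInterval => p.1 * p.2 :=
    (continuous_fst.mul continuous_snd).measurable
  refine ⟨⟨((ν : Measure unitInterval).prod (ρ : Measure unitInterval)).map fun p => p.1 * p.2,
    Measure.isProbabilityMeasure_map hm.aemeasurable⟩, fun t ht => ?_⟩
  beta_reduce
  rw [ProbabilityMeasure.coe_mk, integral_map hm.aemeasurable
    (continuous_unitInterval_rpow ht).aestronglyMeasurable, ← hν t ht, ← hρ t ht,
    ← integral_prod_mul]
  refine integral_congr_ae (ae_of_all _ fun p => ?_)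
  simp [mul_rpow p.1.2.1 p.2.2.1]

lemma isMomentFunction_one : IsMomentFunction fun _ => 1 :=
  ⟨⟨Measure.dirac 1, inferInstance⟩, fun t _ => by simp⟩

lemma IsMomentFunction.pow {f : ℝ → ℝ} (hf : IsMomentFunction f) (k : ℕ) :
    IsMomentFunction fun t => f t ^ k := by
  induction k with
  | zero => simpa using isMomentFunction_one
  | succ k ih => simpa only [pow_succ] using ih.mul hf

lemma isMomentFunction_of_tendsto {f : ℕ → ℝ → ℝ} {g : ℝ → ℝ} (hf : ∀ k, IsMomentFunction (f k))
    (hg : ∀ t, 0 < t → Tendsto (fun k => f k t) atTop (𝓝 (g t))) : IsMomentFunction g := by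
  choose ν hν using hf
  let F : Ultrafilter (ProbabilityMeasure unitInterval) := (hyperfilter ℕ).map ν
  have hF : Tendsto ν (hyperfilter ℕ : Filter ℕ) (𝓝 F.lim) := F.le_nhds_lim
  refine ⟨F.lim, fun t ht => ?_⟩
  have h1 := (ProbabilityMeasure.tendsto_iff_forall_integral_tendsto.1 hF)
    (BoundedContinuousFunction.mkOfCompact ⟨_, continuous_unitInterval_rpow ht⟩)
  simp only [BoundedContinuousFunction.mkOfCompact_apply, ContinuousMap.coe_mk, hν _ t ht] at h1
  exact tendsto_nhds_unique h1 ((hg t ht).mono_left Nat.hyperfilter_le_atTop)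

lemma isMomentFunction_pareto {β h : ℝ} (hh : 0 < h) :
    IsMomentFunction fun t => ∫ u in (0 : ℝ)..1, rexp (-(t * h * u ^ (-β))) := by
  have hm : Measurable fun u : ℝ => rexp (-(h * u ^ (-β))) := by fun_prop
  let φ : unitInterval → unitInterval := fun u => ⟨rexp (-(h * (u : ℝ) ^ (-β))),
    (exp_pos _).le, exp_le_one_iff.2 (by
    have := rpow_nonneg u.2.1 (-β)
    have := mul_nonneg hh.le this
    linarith)⟩
  have hφ : Measurable φ := (hm.comp measurable_subtype_coe).subtype_mk
  refine ⟨⟨(volume : Measure unitInterval).map φ, Measure.isProbabilityMeasure_map hφ.aemeasurable⟩,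
    fun t ht => ?_⟩
  rw [ProbabilityMeasure.coe_mk, integral_map hφ.aemeasurable
    (continuous_unitInterval_rpow ht).aestronglyMeasurable]
  beta_reduce
  rw [intervalIntegral.integral_of_le zero_le_one, ← integral_Icc_eq_integral_Ioc,
    ← integral_subtype_comap measurableSet_Icc]
  refine integral_congr_ae (ae_of_all _ fun u => ?_)
  simp only [φ]
  rw [← exp_mul]
  congr 1
  ring

lemma integrableOn_one_sub_exp_neg_rpow {β : ℝ} (hβ : 1 < β) :
    IntegrableOn (fun v : ℝ => 1 - rexp (-v ^ (-β))) (Ioi 0) := by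
  have hm : Measurable fun v : ℝ => 1 - rexp (-v ^ (-β)) := by fun_prop
  rw [← Ioc_union_Ioi_eq_Ioi (zero_le_one (α := ℝ))]
  refine IntegrableOn.union ?_ ?_
  · refine Measure.integrableOn_of_bounded (M := 1) (by simp) hm.aestronglyMeasurable ?_
    filter_upwards [ae_restrict_mem measurableSet_Ioc] with v hv
    have h1 := exp_pos (-v ^ (-β))
    have h2 : rexp (-v ^ (-β)) ≤ 1 := exp_le_one_iff.2 (by
      have := rpow_nonneg hv.1.le (-β)
      linarith)
    rw [Real.norm_eq_abs, abs_le]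
    constructor <;> linarith
  · refine Integrable.mono' (integrableOn_Ioi_rpow_of_lt (a := -β) (by linarith) zero_lt_one)
      hm.aestronglyMeasurable ?_
    filter_upwards [ae_restrict_mem measurableSet_Ioi] with v hv
    have hv0 : (0 : ℝ) < v := zero_lt_one.trans hv
    have h1 := add_one_le_exp (-v ^ (-β))
    have h2 : rexp (-v ^ (-β)) ≤ 1 := exp_le_one_iff.2 (by
      have := rpow_nonneg hv0.le (-β)
      linarith)
    rw [Real.norm_eq_abs, abs_le]
    constructor <;> linarith

lemma integral_one_sub_exp_neg_rpow_pos {β : ℝ} (hβ : 1 < β) :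
    0 < ∫ v in Ioi (0 : ℝ), (1 - rexp (-v ^ (-β))) := by
  have hpos : ∀ v ∈ Ioi (0 : ℝ), 0 < 1 - rexp (-v ^ (-β)) := fun v hv => by
    have : rexp (-v ^ (-β)) < 1 := exp_lt_one_iff.2 (by
      have := rpow_pos_of_pos hv (-β)
      linarith)
    linarith
  rw [setIntegral_pos_iff_support_of_nonneg_ae _ (integrableOn_one_sub_exp_neg_rpow hβ)]
  · have : (Function.support fun v : ℝ => 1 - rexp (-v ^ (-β))) ∩ Ioi 0 = Ioi 0 :=
      inter_eq_right.2 fun v hv => (hpos v hv).ne'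
    simp [this]
  · filter_upwards [ae_restrict_mem measurableSet_Ioi] with v hv using (hpos v hv).le

lemma one_sub_integral_pareto {α l : ℝ} (hα : 0 < α) (hl : 0 < l) :
    1 - ∫ u in (0 : ℝ)..1, rexp (-(l * u ^ (-α⁻¹))) =
      l ^ α * ∫ v in (0 : ℝ)..(l ^ (-α)), (1 - rexp (-v ^ (-α⁻¹))) := by
  have hla : 0 < l ^ (-α) := rpow_pos_of_pos hl _
  have hb : ∀ u ∈ uIoc (0 : ℝ) 1, ‖rexp (-(l * u ^ (-α⁻¹)))‖ ≤ 1 := fun u hu => by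
    rw [uIoc_of_le zero_le_one] at hu
    rw [Real.norm_eq_abs, abs_exp]
    have := mul_nonneg hl.le (rpow_nonneg hu.1.le (-α⁻¹))
    exact exp_le_one_iff.2 (by linarith)
  have hi : IntervalIntegrable (fun u : ℝ => rexp (-(l * u ^ (-α⁻¹)))) volume 0 1 := by
    rw [intervalIntegrable_iff]
    refine Measure.integrableOn_of_bounded (M := 1) (by simp) (Measurable.aestronglyMeasurable
      (by fun_prop)) ?_
    filter_upwards [ae_restrict_mem measurableSet_uIoc] with u hu using hb u hu
  have h1 : 1 - ∫ u in (0 : ℝ)..1, rexp (-(l * u ^ (-α⁻¹))) =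
      ∫ u in (0 : ℝ)..1, (1 - rexp (-(l * u ^ (-α⁻¹)))) := by
    rw [intervalIntegral.integral_sub (by simp) hi]
    simp
  have h2 := intervalIntegral.integral_comp_mul_left (a := 0) (b := 1)
    (fun v : ℝ => 1 - rexp (-v ^ (-α⁻¹))) hla.ne'
  rw [h1, mul_zero, mul_one] at *
  have h3 : (l ^ (-α))⁻¹ = l ^ α := by rw [rpow_neg hl.le, inv_inv]
  rw [h3, smul_eq_mul] at h2
  rw [← h2]
  refine intervalIntegral.integral_congr fun u hu => ?_
  rw [uIcc_of_le zero_le_one] at hu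
  rw [mul_rpow hla.le hu.1, ← rpow_mul hl.le]
  simp [hα.ne']

lemma isMomentFunction_exp_neg_rpow {α : ℝ} (hα0 : 0 < α) (hα1 : α < 1) :
    IsMomentFunction fun t => rexp (-t ^ α) := by
  have hβ : 1 < α⁻¹ := (one_lt_inv₀ hα0).2 hα1
  set C := ∫ v in Ioi (0 : ℝ), (1 - rexp (-v ^ (-α⁻¹))) with hC
  have hC0 : 0 < C := integral_one_sub_exp_neg_rpow_pos hβ
  let h : ℕ → ℝ := fun k => ((k + 1 : ℝ) * C) ^ (-α⁻¹)
  have hk : ∀ k : ℕ, 0 < (k + 1 : ℝ) * C := fun k => by positivity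
  have hh : ∀ k, 0 < h k := fun k => rpow_pos_of_pos (hk k) _
  have hhα : ∀ k, h k ^ α = ((k + 1 : ℝ) * C)⁻¹ := fun k => by
    simp only [h]
    rw [← rpow_mul (hk k).le, neg_mul, inv_mul_cancel₀ hα0.ne', rpow_neg_one]
  refine isMomentFunction_of_tendsto
    (f := fun k t => (∫ u in (0 : ℝ)..1, rexp (-(t * h k * u ^ (-α⁻¹)))) ^ (k + 1))
    (fun k => (isMomentFunction_pareto (hh k)).pow (k + 1)) fun t ht => ?_
  have hta : 0 < t ^ α := rpow_pos_of_pos ht _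
  have htop : Tendsto (fun k : ℕ => (t * h k) ^ (-α)) atTop atTop := by
    have : (fun k : ℕ => (t * h k) ^ (-α)) = fun k : ℕ => (k + 1 : ℝ) * (C / t ^ α) := by
      funext k
      rw [rpow_neg (mul_pos ht (hh k)).le, mul_rpow ht.le (hh k).le, hhα]
      field_simp
    rw [this]
    refine Tendsto.atTop_mul_const (by positivity) ?_
    exact tendsto_atTop_add_const_right _ _ tendsto_natCast_atTop_atTop
  have hint := intervalIntegral_tendsto_integral_Ioi 0 (integrableOn_one_sub_exp_neg_rpow hβ) htop
  have key : Tendsto (fun k : ℕ => ((k + 1 : ℕ) : ℝ) *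
      ((∫ u in (0 : ℝ)..1, rexp (-(t * h k * u ^ (-α⁻¹)))) - 1)) atTop (𝓝 (-t ^ α)) := by
    have heq : (fun k : ℕ => ((k + 1 : ℕ) : ℝ) *
        ((∫ u in (0 : ℝ)..1, rexp (-(t * h k * u ^ (-α⁻¹)))) - 1)) = fun k : ℕ =>
        -(t ^ α / C) * ∫ v in (0 : ℝ)..((t * h k) ^ (-α)), (1 - rexp (-v ^ (-α⁻¹))) := by
      funext k
      rw [← neg_sub 1, one_sub_integral_pareto hα0 (mul_pos ht (hh k)),
        mul_rpow ht.le (hh k).le, hhα]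
      push_cast
      field_simp
    rw [heq]
    have := hint.const_mul (-(t ^ α / C))
    rwa [← hC, neg_mul, div_mul_cancel₀ _ hC0.ne'] at this
  let g : ℕ → ℝ := fun m => (∫ u in (0 : ℝ)..1, rexp (-(t * h (m - 1) * u ^ (-α⁻¹)))) - 1
  have hg : Tendsto (fun m : ℕ => (m : ℝ) * g m) atTop (𝓝 (-t ^ α)) :=
    (tendsto_add_atTop_iff_nat 1).1 (by simpa [g] using key)
  have := (tendsto_add_atTop_iff_nat 1).2 (Real.tendsto_one_add_pow_exp_of_tendsto hg)
  simpa [g] using this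

/-- The law of the one-sided `α`-stable subordinator at time one. -/
lemma exists_stable_subordinator {α : ℝ} (hα0 : 0 < α) (hα1 : α < 1) :
    ∃ μ : Measure ℝ, IsProbabilityMeasure μ ∧ (∀ᵐ s ∂μ, 0 < s) ∧
      ∀ t, 0 ≤ t → ∫ s, rexp (-(t * s)) ∂μ = rexp (-t ^ α) := by
  obtain ⟨ν', hν⟩ := isMomentFunction_exp_neg_rpow hα0 hα1
  obtain ⟨ν, hp⟩ := ν'
  simp only [ProbabilityMeasure.coe_mk] at hν
  have hexp0 : Tendsto (fun k : ℕ => ((k : ℝ) + 1)⁻¹) atTop (𝓝 0) :=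
    tendsto_inv_atTop_zero.comp
      (tendsto_atTop_add_const_right _ _ tendsto_natCast_atTop_atTop)
  have h0 : ∀ᵐ y ∂ν, y ≠ 0 := by
    have hlim : Tendsto (fun k : ℕ => ∫ y : unitInterval, (y : ℝ) ^ (((k : ℝ) + 1)⁻¹) ∂ν) atTop
        (𝓝 (∫ y : unitInterval, indicator {0}ᶜ (fun _ => (1 : ℝ)) y ∂ν)) := by
      refine tendsto_integral_of_dominated_convergence (fun _ => 1) (fun k =>
        (continuous_unitInterval_rpow (by positivity)).aestronglyMeasurable)
        (integrable_const _) (fun k => ae_of_all _ fun y => ?_) (ae_of_all _ fun y => ?_)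
      · rw [Real.norm_eq_abs, abs_of_nonneg (rpow_nonneg y.2.1 _)]
        exact rpow_le_one y.2.1 y.2.2 (by positivity)
      · by_cases hy : y = 0
        · subst hy
          have : ∀ k : ℕ, ((k : ℝ) + 1)⁻¹ ≠ 0 := fun k => by positivity
          simp [zero_rpow (this _)]
        · have hy' : (y : ℝ) ≠ 0 := fun h => hy (Subtype.ext h)
          have := (continuousAt_const_rpow (b := 0) hy').tendsto.comp hexp0
          simpa [hy, Function.comp_def] using this
    have hlim' : Tendsto (fun k : ℕ => ∫ y : unitInterval, (y : ℝ) ^ (((k : ℝ) + 1)⁻¹) ∂ν) atTop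
        (𝓝 1) := by
      have h2 : Tendsto (fun k : ℕ => rexp (-(((k : ℝ) + 1)⁻¹) ^ α)) atTop (𝓝 (rexp (-0 ^ α))) :=
        ((continuous_exp.comp (continuous_rpow_const hα0.le).neg).tendsto 0).comp hexp0
      rw [zero_rpow hα0.ne', neg_zero, exp_zero] at h2
      exact h2.congr fun k => (hν _ (by positivity)).symm
    have h1 := tendsto_nhds_unique hlim hlim'
    rw [integral_indicator (measurableSet_singleton _).compl] at h1
    simp only [integral_const, smul_eq_mul, mul_one, measureReal_restrict_apply_univ] at h1
    have h3 := (prob_compl_eq_one_iff (μ := ν) (measurableSet_singleton (0 : unitInterval))).1 (by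
      rw [measureReal_def, ENNReal.toReal_eq_one_iff] at h1
      exact h1)
    rw [ae_iff]
    simpa using h3
  have h1 : ∀ᵐ y ∂ν, y ≠ 1 := by
    have hle : ∀ k : ℕ, ν.real {1} ≤ rexp (-((k : ℝ) + 1) ^ α) := fun k => by
      have hk : (0 : ℝ) < k + 1 := by positivity
      rw [← hν _ hk, ← integral_indicator_one (measurableSet_singleton _)]
      refine integral_mono ((integrable_const (1 : ℝ)).indicator (measurableSet_singleton _)) ?_ ?_
      · refine Integrable.mono' (integrable_const (1 : ℝ))
          (continuous_unitInterval_rpow hk).aestronglyMeasurable (ae_of_all _ fun y => ?_)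
        rw [Real.norm_eq_abs, abs_of_nonneg (rpow_nonneg y.2.1 _)]
        exact rpow_le_one y.2.1 y.2.2 hk.le
      · intro y
        by_cases hy : y = 1
        · simp [hy]
        · simpa [hy] using rpow_nonneg y.2.1 _
    have hlim : Tendsto (fun k : ℕ => rexp (-((k : ℝ) + 1) ^ α)) atTop (𝓝 0) :=
      tendsto_exp_neg_atTop_nhds_zero.comp ((tendsto_rpow_atTop hα0).comp
        (tendsto_atTop_add_const_right _ _ tendsto_natCast_atTop_atTop))
    have : ν.real {1} = 0 :=
      le_antisymm (ge_of_tendsto' hlim hle) measureReal_nonneg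
    rw [ae_iff]
    simpa [measureReal_def, ENNReal.toReal_eq_zero_iff] using this
  have hm : Measurable fun y : unitInterval => -Real.log y := by fun_prop
  have hpm : IsProbabilityMeasure (ν.map fun y : unitInterval => -Real.log y) :=
    Measure.isProbabilityMeasure_map hm.aemeasurable
  refine ⟨ν.map fun y : unitInterval => -Real.log y, hpm, ?_, fun t ht => ?_⟩
  · rw [ae_map_iff hm.aemeasurable measurableSet_Ioi]
    filter_upwards [h0, h1] with y hy0 hy1
    have h0 : (0 : ℝ) < y := lt_of_le_of_ne y.2.1 fun h => hy0 (Subtype.ext h.symm)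
    have h1 : (y : ℝ) < 1 := lt_of_le_of_ne y.2.2 fun h => hy1 (Subtype.ext h)
    have := Real.log_neg h0 h1
    linarith
  · rcases ht.eq_or_lt with rfl | ht
    · simp [zero_rpow hα0.ne']
    rw [integral_map hm.aemeasurable (Measurable.aestronglyMeasurable (by fun_prop)), ← hν t ht]
    refine integral_congr_ae ?_
    filter_upwards [h0] with y hy0
    have h0 : (0 : ℝ) < y := lt_of_le_of_ne y.2.1 fun h => hy0 (Subtype.ext h.symm)
    rw [rpow_def_of_pos h0]
    congr 1
    ring

/-- `∫ s ^ (-m) e ^ (-r / (4 s)) dμ(s)`. -/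
def heatMixture (μ : Measure ℝ) (m r : ℝ) : ℝ := ∫ s, s ^ (-m) * rexp (-(r / (4 * s))) ∂μ

lemma exists_rpow_mul_exp_le {m : ℝ} (hm : 0 ≤ m) :
    ∃ C > 0, ∀ x : ℝ, 0 < x → x ^ m * rexp (-(x / 4)) ≤ C * (1 - rexp (-x⁻¹)) := by
  obtain ⟨k, hk⟩ := exists_nat_ge (m + 1)
  refine ⟨k.factorial * 4 ^ k * rexp (1 / 4), by positivity, fun x hx => ?_⟩
  have h1 : (1 + x) ^ k ≤ k.factorial * 4 ^ k * rexp (1 / 4) * rexp (x / 4) := by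
    have := pow_div_factorial_le_exp (x := (1 + x) / 4) (by positivity) k
    rw [div_le_iff₀ (by positivity), div_pow, div_le_iff₀ (by positivity)] at this
    refine this.trans (le_of_eq ?_)
    rw [mul_assoc _ (rexp _), ← exp_add]
    ring_nf
  have h2 : x ^ m * (1 + x) ≤ (1 + x) ^ k := by
    calc x ^ m * (1 + x) ≤ (1 + x) ^ m * (1 + x) := by gcongr; linarith
      _ = (1 + x) ^ (m + 1) := by rw [rpow_add (by positivity), rpow_one]
      _ ≤ (1 + x) ^ (k : ℝ) := rpow_le_rpow_of_exponent_le (by linarith) hk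
      _ = _ := rpow_natCast _ _
  have h3 : (1 + x)⁻¹ ≤ 1 - rexp (-x⁻¹) := by
    have h4 : rexp (-x⁻¹) ≤ (1 + x⁻¹)⁻¹ := by
      rw [exp_neg]
      refine inv_anti₀ (by positivity) ?_
      have := add_one_le_exp x⁻¹
      linarith
    have h5 : (1 + x⁻¹)⁻¹ = 1 - (1 + x)⁻¹ := by field_simp; ring
    linarith
  calc x ^ m * rexp (-(x / 4)) = x ^ m * (1 + x) * rexp (-(x / 4)) * (1 + x)⁻¹ := by field_simp
    _ ≤ k.factorial * 4 ^ k * rexp (1 / 4) * rexp (x / 4) * rexp (-(x / 4)) *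
        (1 - rexp (-x⁻¹)) :=
      mul_le_mul (mul_le_mul_of_nonneg_right (h2.trans h1) (exp_pos _).le) h3 (by positivity)
        (by positivity)
    _ = _ := by rw [mul_assoc _ (rexp _) (rexp _), ← exp_add]; simp

lemma div_one_add_le_one_sub_exp_neg {u : ℝ} (hu : 0 ≤ u) : u / (1 + u) ≤ 1 - rexp (-u) := by
  have h4 : rexp (-u) ≤ (1 + u)⁻¹ := by
    rw [exp_neg]
    refine inv_anti₀ (by positivity) ?_
    have := add_one_le_exp u
    linarith
  have h5 : (1 + u)⁻¹ = 1 - u / (1 + u) := by field_simp; ring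
  linarith

lemma exp_combination_le {m δ L u : ℝ} (hm : 0 ≤ m) (hδ : 0 ≤ δ) (hL : 1 ≤ L) (hu : 0 < u) :
    (1 - rexp (-(δ * u))) - 2 * δ * (1 - rexp (-u)) - 2 * (1 - rexp (-(u / L))) ≤
      L ^ m * rexp (1 / 4) * (u ^ (-m) * rexp (-(1 / (4 * u)))) := by
  have hL0 : 0 < L := by linarith
  have e1 := div_one_add_le_one_sub_exp_neg hu.le
  have e2 := div_one_add_le_one_sub_exp_neg (div_pos hu hL0).le
  have e3 := exp_pos (-(δ * u))
  have hR : 0 ≤ L ^ m * rexp (1 / 4) * (u ^ (-m) * rexp (-(1 / (4 * u)))) := by positivity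
  have p1 : 0 ≤ u / (1 + u) := by positivity
  have p2 : 0 ≤ u / L / (1 + u / L) := by positivity
  have p3 : 0 ≤ 2 * δ * (1 - rexp (-u)) := mul_nonneg (by linarith) (by linarith)
  rcases le_total u 1 with h | h
  · have a1 : 1 - rexp (-(δ * u)) ≤ δ * u := by
      have := add_one_le_exp (-(δ * u))
      linarith
    have a2 : u / 2 ≤ u / (1 + u) := by gcongr; linarith
    have a3 : 2 * δ * (u / 2) ≤ 2 * δ * (1 - rexp (-u)) := by gcongr; linarith
    linarith
  rcases le_total L u with h' | h'
  · have a1 : 1 / 2 ≤ u / L / (1 + u / L) := by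
      have : 1 ≤ u / L := (one_le_div hL0).2 h'
      rw [div_le_div_iff₀ (by norm_num) (by positivity)]
      linarith
    linarith
  · have a1 : L ^ (-m) ≤ u ^ (-m) := rpow_le_rpow_of_nonpos hu h' (by linarith)
    have a2 : rexp (-(1 / 4)) ≤ rexp (-(1 / (4 * u))) := by
      gcongr
      linarith
    have a3 : 1 ≤ L ^ m * rexp (1 / 4) * (u ^ (-m) * rexp (-(1 / (4 * u)))) := by
      calc 1 = L ^ m * rexp (1 / 4) * (L ^ (-m) * rexp (-(1 / 4))) := by
            rw [rpow_neg hL0.le, exp_neg]; field_simp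
        _ ≤ _ := by gcongr
    linarith

section heatMixture

variable {μ : Measure ℝ} {α : ℝ}

lemma integrable_exp_neg_mul [IsProbabilityMeasure μ] (hpos : ∀ᵐ s ∂μ, 0 < s) {t : ℝ}
    (ht : 0 ≤ t) : Integrable (fun s => rexp (-(t * s))) μ := by
  refine Integrable.mono' (integrable_const (1 : ℝ)) (Measurable.aestronglyMeasurable
    (by fun_prop)) ?_
  filter_upwards [hpos] with s hs
  rw [norm_eq_abs, abs_exp]
  exact exp_le_one_iff.2 (by have := mul_nonneg ht hs.le; linarith)

lemma integrable_one_sub_exp_neg_mul [IsProbabilityMeasure μ] (hpos : ∀ᵐ s ∂μ, 0 < s) {t : ℝ}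
    (ht : 0 ≤ t) : Integrable (fun s => 1 - rexp (-(t * s))) μ :=
  (integrable_const _).sub (integrable_exp_neg_mul hpos ht)

lemma integral_one_sub_exp_neg_mul [IsProbabilityMeasure μ] (hpos : ∀ᵐ s ∂μ, 0 < s)
    (hμ : ∀ t, 0 ≤ t → ∫ s, rexp (-(t * s)) ∂μ = rexp (-t ^ α)) {t : ℝ} (ht : 0 ≤ t) :
    ∫ s, (1 - rexp (-(t * s))) ∂μ = 1 - rexp (-t ^ α) := by
  rw [integral_sub (integrable_const _) (integrable_exp_neg_mul hpos ht), hμ t ht]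
  simp

lemma exp_neg_div_le_one {r s : ℝ} (hr : 0 ≤ r) (hs : 0 < s) : rexp (-(r / (4 * s))) ≤ 1 :=
  exp_le_one_iff.2 (by
    have : 0 ≤ r / (4 * s) := by positivity
    linarith)

lemma integrable_heatMixture (hpos : ∀ᵐ s ∂μ, 0 < s) {m r : ℝ} (hr : 0 ≤ r)
    (hm : Integrable (fun s => s ^ (-m)) μ) :
    Integrable (fun s => s ^ (-m) * rexp (-(r / (4 * s)))) μ := by
  refine Integrable.mono' hm (Measurable.aestronglyMeasurable (by fun_prop)) ?_
  filter_upwards [hpos] with s hs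
  rw [norm_mul, norm_eq_abs, norm_eq_abs, abs_exp, abs_of_pos (rpow_pos_of_pos hs _)]
  exact mul_le_of_le_one_right (rpow_nonneg hs.le _) (exp_neg_div_le_one hr hs)

lemma heatMixture_pos [IsProbabilityMeasure μ] (hpos : ∀ᵐ s ∂μ, 0 < s) {m r : ℝ} (hr : 0 ≤ r)
    (hm : Integrable (fun s => s ^ (-m)) μ) : 0 < heatMixture μ m r := by
  have h : ∀ᵐ s ∂μ, 0 < s ^ (-m) * rexp (-(r / (4 * s))) := by
    filter_upwards [hpos] with s hs
    positivity
  refine (integral_pos_iff_support_of_nonneg_ae (h.mono fun s hs => hs.le)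
    (integrable_heatMixture hpos hr hm)).2 ?_
  have : (Function.support fun s => s ^ (-m) * rexp (-(r / (4 * s)))) =ᵐ[μ] univ :=
    eventuallyEq_univ.2 (h.mono fun s hs => hs.ne')
  rw [measure_congr this]
  simp

lemma heatMixture_anti (hpos : ∀ᵐ s ∂μ, 0 < s) {m r₁ r₂ : ℝ} (hr : 0 ≤ r₁) (h : r₁ ≤ r₂)
    (hm : Integrable (fun s => s ^ (-m)) μ) : heatMixture μ m r₂ ≤ heatMixture μ m r₁ := by
  refine integral_mono_ae (integrable_heatMixture hpos (hr.trans h) hm)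
    (integrable_heatMixture hpos hr hm) ?_
  filter_upwards [hpos] with s hs
  gcongr

lemma exists_heatMixture_le [IsProbabilityMeasure μ] (hpos : ∀ᵐ s ∂μ, 0 < s)
    (hμ : ∀ t, 0 ≤ t → ∫ s, rexp (-(t * s)) ∂μ = rexp (-t ^ α)) {m : ℝ} (hm0 : 0 ≤ m)
    (hm : Integrable (fun s => s ^ (-m)) μ) :
    ∃ C > 0, ∀ r, 0 < r → r ^ m * heatMixture μ m r ≤ C * r ^ (-α) := by
  obtain ⟨C, hC, h⟩ := exists_rpow_mul_exp_le hm0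
  refine ⟨C, hC, fun r hr => ?_⟩
  have hr' : 0 ≤ 1 / r := by positivity
  calc r ^ m * heatMixture μ m r = ∫ s, r ^ m * (s ^ (-m) * rexp (-(r / (4 * s)))) ∂μ :=
        (integral_const_mul _ _).symm
    _ ≤ ∫ s, C * (1 - rexp (-(1 / r * s))) ∂μ := by
        refine integral_mono_ae ((integrable_heatMixture hpos hr.le hm).const_mul _)
          ((integrable_one_sub_exp_neg_mul hpos hr').const_mul _) ?_
        filter_upwards [hpos] with s hs
        have := h (r / s) (by positivity)
        rw [div_rpow hr.le hs.le, inv_div] at this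
        rw [rpow_neg hs.le]
        refine le_trans (le_of_eq ?_) (this.trans (le_of_eq ?_))
        · rw [div_div, mul_comm s 4, div_eq_mul_inv]; ring
        · rw [one_div_mul_eq_div]
    _ = C * (1 - rexp (-(1 / r) ^ α)) := by
        rw [integral_const_mul, integral_one_sub_exp_neg_mul hpos hμ hr']
    _ ≤ C * r ^ (-α) := by
        gcongr
        rw [one_div, inv_rpow hr.le, ← rpow_neg hr.le]
        have := add_one_le_exp (-r ^ (-α))
        linarith

lemma exists_le_heatMixture [IsProbabilityMeasure μ] (hα0 : 0 < α) (hα1 : α < 1)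
    (hpos : ∀ᵐ s ∂μ, 0 < s)
    (hμ : ∀ t, 0 ≤ t → ∫ s, rexp (-(t * s)) ∂μ = rexp (-t ^ α)) {m : ℝ} (hm0 : 0 ≤ m)
    (hm : Integrable (fun s => s ^ (-m)) μ) :
    ∃ c > 0, ∀ r, 1 ≤ r → r ^ (-α) ≤ c * (r ^ m * heatMixture μ m r) := by
  obtain ⟨δ, hδ0, hδ1, hδ⟩ : ∃ δ : ℝ, 0 < δ ∧ δ ≤ 1 ∧ 2 * δ = δ ^ α / 8 := by
    have h1 : (0 : ℝ) < 1 - α := by linarith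
    refine ⟨(1 / 16 : ℝ) ^ (1 / (1 - α)), by positivity,
      rpow_le_one (by norm_num) (by norm_num) (by positivity), ?_⟩
    set δ : ℝ := (1 / 16 : ℝ) ^ (1 / (1 - α)) with hδ
    have h0 : 0 < δ := by positivity
    have h2 : δ ^ (1 - α) = 1 / 16 := by
      rw [hδ, ← rpow_mul (by norm_num), one_div_mul_cancel h1.ne', rpow_one]
    have h3 : δ = δ ^ (1 - α) * δ ^ α := by rw [← rpow_add h0]; simp
    rw [h2] at h3
    linarith
  have hδα : 0 < δ ^ α := by positivity
  have hδα1 : δ ^ α ≤ 1 := rpow_le_one hδ0.le hδ1 hα0.le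
  obtain ⟨L, hL1, hL⟩ : ∃ L : ℝ, 1 ≤ L ∧ 2 * (1 / L) ^ α = δ ^ α / 8 := by
    refine ⟨(16 / δ ^ α) ^ (1 / α), one_le_rpow ?_ (by positivity), ?_⟩
    · rw [one_le_div hδα]; linarith
    · rw [div_rpow zero_le_one (by positivity), one_rpow, ← rpow_mul (by positivity),
        one_div_mul_cancel hα0.ne', rpow_one]
      field_simp
      norm_num
  have hL0 : 0 < L := by linarith
  refine ⟨4 / δ ^ α * (L ^ m * rexp (1 / 4)), by positivity, fun r hr => ?_⟩
  have hr0 : 0 < r := by linarith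
  set ρ := r ^ (-α) with hρ
  have hρ0 : 0 < ρ := by positivity
  have hρ1 : ρ ≤ 1 := rpow_le_one_of_one_le_of_nonpos hr (by linarith)
  have hrα : ∀ a : ℝ, 0 ≤ a → (a / r) ^ α = a ^ α * ρ := fun a ha => by
    rw [div_rpow ha hr0.le, hρ, rpow_neg hr0.le, div_eq_mul_inv]
  have d1 : 0 ≤ δ / r := by positivity
  have d2 : 0 ≤ 1 / r := by positivity
  have d3 : 0 ≤ 1 / L / r := by positivity
  have i1 := integrable_one_sub_exp_neg_mul hpos d1
  have i2 := (integrable_one_sub_exp_neg_mul hpos d2).const_mul (2 * δ)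
  have i3 := (integrable_one_sub_exp_neg_mul hpos d3).const_mul 2
  have i12 : Integrable (fun s =>
      (1 - rexp (-(δ / r * s))) - 2 * δ * (1 - rexp (-(1 / r * s)))) μ :=
    i1.sub i2
  have key : (1 - rexp (-(δ ^ α * ρ))) - 2 * δ * (1 - rexp (-ρ)) -
      2 * (1 - rexp (-((1 / L) ^ α * ρ))) ≤
        L ^ m * rexp (1 / 4) * (r ^ m * heatMixture μ m r) := by
    calc _ = ∫ s, ((1 - rexp (-(δ / r * s))) - 2 * δ * (1 - rexp (-(1 / r * s))) -
          2 * (1 - rexp (-(1 / L / r * s)))) ∂μ := by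
          rw [integral_sub i12 i3, integral_sub i1 i2, integral_const_mul,
            integral_const_mul, integral_one_sub_exp_neg_mul hpos hμ d1,
            integral_one_sub_exp_neg_mul hpos hμ d2, integral_one_sub_exp_neg_mul hpos hμ d3,
            hrα _ hδ0.le, hrα _ zero_le_one, hrα _ (by positivity), one_rpow, one_mul]
      _ ≤ ∫ s, L ^ m * rexp (1 / 4) * (r ^ m * (s ^ (-m) * rexp (-(r / (4 * s))))) ∂μ := by
          refine integral_mono_ae (i12.sub i3)
            (((integrable_heatMixture hpos hr0.le hm).const_mul _).const_mul _) ?_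
          filter_upwards [hpos] with s hs
          have := exp_combination_le hm0 hδ0.le hL1 (div_pos hs hr0)
          refine le_trans (le_of_eq ?_) (this.trans (le_of_eq ?_))
          · congr 5 <;> field_simp
          · rw [div_rpow hs.le hr0.le, rpow_neg hr0.le, div_inv_eq_mul]
            have : 1 / (4 * (s / r)) = r / (4 * s) := by field_simp
            rw [this]
            ring
      _ = _ := by
          rw [integral_const_mul, integral_const_mul, heatMixture]
  have k1 : δ ^ α * ρ / 2 ≤ 1 - rexp (-(δ ^ α * ρ)) := by
    refine le_trans ?_ (div_one_add_le_one_sub_exp_neg (by positivity))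
    gcongr
    nlinarith
  have k2 : 2 * δ * (1 - rexp (-ρ)) ≤ δ ^ α / 8 * ρ := by
    rw [← hδ]
    gcongr
    have := add_one_le_exp (-ρ)
    linarith
  have k3 : 2 * (1 - rexp (-((1 / L) ^ α * ρ))) ≤ 2 * (1 / L) ^ α * ρ := by
    have := add_one_le_exp (-((1 / L) ^ α * ρ))
    linarith
  rw [hL] at k3
  have k4 : δ ^ α / 4 * ρ ≤ L ^ m * rexp (1 / 4) * (r ^ m * heatMixture μ m r) := by linarith
  calc ρ = 4 / δ ^ α * (δ ^ α / 4 * ρ) := by field_simp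
    _ ≤ 4 / δ ^ α * (L ^ m * rexp (1 / 4) * (r ^ m * heatMixture μ m r)) := by gcongr
    _ = _ := by ring

lemma exists_heatMixture_add_le [IsProbabilityMeasure μ] (hα0 : 0 < α) (hα1 : α < 1)
    (hpos : ∀ᵐ s ∂μ, 0 < s)
    (hμ : ∀ t, 0 ≤ t → ∫ s, rexp (-(t * s)) ∂μ = rexp (-t ^ α)) {m : ℝ} (hm0 : 0 ≤ m) (j : ℕ)
    (hm : Integrable (fun s => s ^ (-m)) μ) (hmj : Integrable (fun s => s ^ (-(m + j))) μ) :
    ∃ C > 0, ∀ r, 0 ≤ r → (1 + r ^ j) * heatMixture μ (m + j) r ≤ C * heatMixture μ m r := by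
  have hj0 : 0 ≤ m + j := by positivity
  obtain ⟨C, hC, hC'⟩ := exists_heatMixture_le hpos hμ hj0 hmj
  obtain ⟨c, hc, hc'⟩ := exists_le_heatMixture hα0 hα1 hpos hμ hm0 hm
  have hF1 := heatMixture_pos hpos zero_le_one hm
  have hG0 := heatMixture_pos hpos le_rfl hmj
  set D := 2 * (heatMixture μ (m + j) 0 / heatMixture μ m 1) with hD
  have hD0 : 0 < D := by positivity
  refine ⟨D + 2 * (C * c), by positivity, fun r hr => ?_⟩
  have hFr := heatMixture_pos hpos hr hm
  have hGr := heatMixture_pos hpos hr hmj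
  rcases le_total r 1 with h | h
  · calc (1 + r ^ j) * heatMixture μ (m + j) r ≤ (1 + 1) * heatMixture μ (m + j) 0 := by
          gcongr
          · exact pow_le_one₀ hr h
          · exact heatMixture_anti hpos le_rfl hr hmj
      _ = D * heatMixture μ m 1 := by rw [hD]; field_simp; norm_num
      _ ≤ D * heatMixture μ m r := by
          gcongr
          exact heatMixture_anti hpos hr h hm
      _ ≤ _ := by gcongr; linarith [mul_pos hC hc]
  · have hr0 : 0 < r := by linarith
    have hrm : 0 < r ^ m := by positivity
    have h1 := (hC' r hr0).trans (mul_le_mul_of_nonneg_left (hc' r h) hC.le)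
    rw [rpow_add hr0, rpow_natCast] at h1
    have h2 : r ^ j * heatMixture μ (m + j) r ≤ C * c * heatMixture μ m r := by
      refine le_of_mul_le_mul_left ?_ hrm
      linarith
    have h3 : (1 : ℝ) ≤ r ^ j := one_le_pow₀ h
    calc (1 + r ^ j) * heatMixture μ (m + j) r ≤ (r ^ j + r ^ j) * heatMixture μ (m + j) r := by
          gcongr
      _ = 2 * (r ^ j * heatMixture μ (m + j) r) := by ring
      _ ≤ 2 * (C * c * heatMixture μ m r) := by gcongr
      _ ≤ (D + 2 * (C * c)) * heatMixture μ m r := by nlinarith [mul_pos hD0 hFr]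

lemma hasFDerivAt_heatMixture {E : Type*} [NormedAddCommGroup E] [InnerProductSpace ℝ E]
    (hpos : ∀ᵐ s ∂μ, 0 < s) {m : ℝ}
    (hm : Integrable (fun s => s ^ (-m)) μ) (hm1 : Integrable (fun s => s ^ (-(m + 1))) μ)
    (w : E) :
    HasFDerivAt (fun w : E => heatMixture μ m (‖w‖ ^ 2))
      ((-(1 / 2) * heatMixture μ (m + 1) (‖w‖ ^ 2)) • innerSL ℝ w) w := by
  let F' : E → ℝ → E →L[ℝ] ℝ := fun v s =>
    (-(1 / 2) * (s ^ (-(m + 1)) * rexp (-(‖v‖ ^ 2 / (4 * s))))) • innerSL ℝ v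
  have key := hasFDerivAt_integral_of_dominated_of_fderiv_le (μ := μ) (F' := F')
    (F := fun (v : E) s => s ^ (-m) * rexp (-(‖v‖ ^ 2 / (4 * s))))
    (bound := fun s => s ^ (-(m + 1)) * (‖w‖ + 1)) (x₀ := w) (ball_mem_nhds w one_pos)
    (Eventually.of_forall fun v => Measurable.aestronglyMeasurable (by fun_prop))
    (integrable_heatMixture hpos (by positivity) hm)
    (AEStronglyMeasurable.smul_const (Measurable.aestronglyMeasurable (by fun_prop)) _)
    ?_ (hm1.mul_const _) ?_
  · refine key.congr_fderiv ?_
    simp only [F']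
    rw [integral_smul_const, integral_const_mul, heatMixture]
  · filter_upwards [hpos] with s hs v hv
    simp only [F']
    have hv' : ‖v‖ ≤ ‖w‖ + 1 := by
      have := norm_sub_norm_le v w
      rw [mem_ball, dist_eq_norm] at hv
      linarith
    have hs' : 0 < s ^ (-(m + 1)) := by positivity
    rw [norm_smul, innerSL_apply_norm, norm_mul, norm_mul, norm_eq_abs (rexp _), abs_exp,
      norm_eq_abs (s ^ _), abs_of_pos hs']
    have h1 := exp_neg_div_le_one (r := ‖v‖ ^ 2) (by positivity) hs
    have h2 : ‖(-(1 / 2) : ℝ)‖ ≤ 1 := by norm_num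
    calc _ ≤ 1 * (s ^ (-(m + 1)) * 1) * (‖w‖ + 1) := by gcongr
      _ = _ := by ring
  · filter_upwards [hpos] with s hs v hv
    have h1 : HasFDerivAt (fun v : E => ‖v‖ ^ 2) (2 • innerSL ℝ v) v :=
      (hasStrictFDerivAt_norm_sq v).hasFDerivAt
    have h2 : HasDerivAt (fun r : ℝ => s ^ (-m) * rexp (-(r / (4 * s))))
        (s ^ (-m) * (rexp (-(‖v‖ ^ 2 / (4 * s))) * -(1 / (4 * s)))) (‖v‖ ^ 2) :=
      ((((hasDerivAt_id _).div_const _).neg).exp).const_mul _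
    refine (h2.comp_hasFDerivAt v h1).congr_fderiv ?_
    ext z
    simp only [F', neg_add, rpow_add hs, rpow_neg_one, smul_eq_mul,
      _root_.smul_apply, nsmul_eq_mul]
    field_simp
    ring

end heatMixture

lemma integrable_norm_rpow_mul_exp_neg {d : ℕ} (hd : 1 ≤ d) {p σ b : ℝ} (hp : 0 ≤ p)
    (hσ : 0 < σ) (hb : 0 < b) :
    Integrable (fun ξ : Eu d => ‖ξ‖ ^ p * rexp (-b * ‖ξ‖ ^ σ)) := by
  have : Nonempty (Fin d) := ⟨⟨0, hd⟩⟩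
  refine (integrable_fun_norm_addHaar (volume : Measure (Eu d))
    (f := fun y : ℝ => y ^ p * rexp (-b * y ^ σ))).2 ?_
  have h0 : (0 : ℝ) ≤ (d - 1 : ℕ) := Nat.cast_nonneg _
  refine (integrableOn_rpow_mul_exp_neg_mul_rpow (s := (d - 1 : ℕ) + p) (by linarith) hσ
    hb).congr_fun (fun y hy => ?_) measurableSet_Ioi
  simp only [finrank_euclideanSpace, Fintype.card_fin, smul_eq_mul]
  rw [rpow_add hy, rpow_natCast, mul_assoc]

lemma integrable_exp_neg_norm_rpow {d : ℕ} (hd : 1 ≤ d) {σ : ℝ} (hσ : 0 < σ) :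
    Integrable (fun ξ : Eu d => rexp (-‖ξ‖ ^ σ)) := by
  simpa using integrable_norm_rpow_mul_exp_neg hd le_rfl hσ one_pos

lemma integral_gaussian_mul_cexp_inner {d : ℕ} {s : ℝ} (hs : 0 < s) (w : Eu d) :
    ∫ ξ : Eu d, (rexp (-(‖ξ‖ ^ 2 * s)) : ℂ) * Complex.exp (Complex.I * (⟪w, ξ⟫_ℝ : ℂ)) =
      ((π ^ ((d : ℝ) / 2) * (s ^ (-((d : ℝ) / 2)) * rexp (-(‖w‖ ^ 2 / (4 * s)))) : ℝ) : ℂ) := by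
  have h := GaussianFourier.integral_cexp_neg_mul_sq_norm_add (V := Eu d) (b := (s : ℂ))
    (by simpa using hs) Complex.I w
  have hl : ∀ ξ : Eu d, (rexp (-(‖ξ‖ ^ 2 * s)) : ℂ) * Complex.exp (Complex.I * (⟪w, ξ⟫_ℝ : ℂ)) =
      Complex.exp (-(s : ℂ) * ‖ξ‖ ^ 2 + Complex.I * (⟪w, ξ⟫_ℝ : ℂ)) := fun ξ => by
    rw [Complex.exp_add]
    push_cast
    ring_nf
  simp_rw [hl]
  rw [h, finrank_euclideanSpace, Fintype.card_fin, Complex.I_sq, ← mul_assoc,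
    rpow_neg hs.le, ← div_eq_mul_inv, ← div_rpow pi_pos.le hs.le, Complex.ofReal_mul,
    Complex.ofReal_cpow (by positivity)]
  push_cast
  congr 2
  ring

section subordination

variable {μ : Measure ℝ} {σ : ℝ}

lemma integral_exp_neg_norm_sq_mul (hμ : ∀ t, 0 ≤ t → ∫ s, rexp (-(t * s)) ∂μ = rexp (-t ^ (σ / 2)))
    {E : Type*} [NormedAddCommGroup E] (ξ : E) :
    ∫ s, rexp (-(‖ξ‖ ^ 2 * s)) ∂μ = rexp (-‖ξ‖ ^ σ) := by
  rw [hμ _ (by positivity), ← rpow_natCast, ← rpow_mul (norm_nonneg _)]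
  congr 3
  push_cast
  ring

lemma integrable_prod_exp_neg_norm_sq_mul [IsProbabilityMeasure μ] (hσ : 0 < σ)
    (hpos : ∀ᵐ s ∂μ, 0 < s)
    (hμ : ∀ t, 0 ≤ t → ∫ s, rexp (-(t * s)) ∂μ = rexp (-t ^ (σ / 2))) {d : ℕ} (hd : 1 ≤ d) :
    Integrable (fun p : Eu d × ℝ => rexp (-(‖p.1‖ ^ 2 * p.2))) (volume.prod μ) := by
  refine (integrable_prod_iff (Measurable.aestronglyMeasurable (by fun_prop))).2 ⟨?_, ?_⟩
  · exact ae_of_all _ fun ξ => integrable_exp_neg_mul hpos (sq_nonneg ‖ξ‖)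
  · simp only [norm_eq_abs, abs_exp, integral_exp_neg_norm_sq_mul hμ]
    exact integrable_exp_neg_norm_rpow hd hσ

lemma integrable_prod_mul_cexp_inner [IsProbabilityMeasure μ] (hσ : 0 < σ)
    (hpos : ∀ᵐ s ∂μ, 0 < s)
    (hμ : ∀ t, 0 ≤ t → ∫ s, rexp (-(t * s)) ∂μ = rexp (-t ^ (σ / 2))) {d : ℕ} (hd : 1 ≤ d)
    (w : Eu d) :
    Integrable (fun p : Eu d × ℝ => (rexp (-(‖p.1‖ ^ 2 * p.2)) : ℂ) *
      Complex.exp (Complex.I * (⟪w, p.1⟫_ℝ : ℂ))) (volume.prod μ) := by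
  refine (integrable_prod_exp_neg_norm_sq_mul hσ hpos hμ hd).mono'
    (Measurable.aestronglyMeasurable (by fun_prop)) (ae_of_all _ fun p => le_of_eq ?_)
  rw [norm_mul, mul_comm Complex.I, Complex.norm_exp_ofReal_mul_I, mul_one, Complex.norm_real,
    norm_eq_abs, abs_exp]

lemma integrable_rpow_neg_half [IsProbabilityMeasure μ] (hσ : 0 < σ) (hpos : ∀ᵐ s ∂μ, 0 < s)
    (hμ : ∀ t, 0 ≤ t → ∫ s, rexp (-(t * s)) ∂μ = rexp (-t ^ (σ / 2))) {d : ℕ} (hd : 1 ≤ d) :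
    Integrable (fun s => s ^ (-((d : ℝ) / 2))) μ := by
  have h := ((integrable_prod_mul_cexp_inner hσ hpos hμ hd (0 : Eu d)).integral_prod_right).re
  refine ((h.const_mul (π ^ ((d : ℝ) / 2))⁻¹).congr ?_)
  filter_upwards [hpos] with s hs
  rw [integral_gaussian_mul_cexp_inner hs]
  have : π ^ ((d : ℝ) / 2) ≠ 0 := by positivity
  simp only [norm_zero, RCLike.re_to_complex, Complex.ofReal_re]
  simp
  field_simp

/-- The Fourier transform of `e^{-|ξ|^σ}` is a Gaussian mixture. -/
lemma integral_exp_neg_norm_rpow_mul_cexp [IsProbabilityMeasure μ] (hσ : 0 < σ)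
    (hpos : ∀ᵐ s ∂μ, 0 < s)
    (hμ : ∀ t, 0 ≤ t → ∫ s, rexp (-(t * s)) ∂μ = rexp (-t ^ (σ / 2))) {d : ℕ} (hd : 1 ≤ d)
    (w : Eu d) :
    ∫ ξ : Eu d, ((rexp (-‖ξ‖ ^ σ) : ℝ) : ℂ) * Complex.exp (Complex.I * (⟪w, ξ⟫_ℝ : ℂ)) =
      ((π ^ ((d : ℝ) / 2) * heatMixture μ ((d : ℝ) / 2) (‖w‖ ^ 2) : ℝ) : ℂ) := by
  have h1 : ∀ ξ : Eu d, ((rexp (-‖ξ‖ ^ σ) : ℝ) : ℂ) * Complex.exp (Complex.I * (⟪w, ξ⟫_ℝ : ℂ)) =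
      ∫ s, (rexp (-(‖ξ‖ ^ 2 * s)) : ℂ) * Complex.exp (Complex.I * (⟪w, ξ⟫_ℝ : ℂ)) ∂μ := fun ξ => by
    rw [integral_mul_const, integral_complex_ofReal, integral_exp_neg_norm_sq_mul hμ]
  simp_rw [h1]
  rw [integral_integral_swap (integrable_prod_mul_cexp_inner hσ hpos hμ hd w), heatMixture,
    ← integral_const_mul, ← integral_complex_ofReal]
  refine integral_congr_ae ?_
  filter_upwards [hpos] with s hs
  exact integral_gaussian_mul_cexp_inner hs w

lemma psi_eq [IsProbabilityMeasure μ] (hσ : 0 < σ)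
    (hpos : ∀ᵐ s ∂μ, 0 < s)
    (hμ : ∀ t, 0 ≤ t → ∫ s, rexp (-(t * s)) ∂μ = rexp (-t ^ (σ / 2))) {d : ℕ} (hd : 1 ≤ d)
    (w : Eu d) :
    Psi d σ w = (2 * π) ^ (-(d : ℝ)) * π ^ ((d : ℝ) / 2) *
      heatMixture μ ((d : ℝ) / 2) (‖w‖ ^ 2) := by
  rw [Psi, integral_exp_neg_norm_rpow_mul_cexp hσ hpos hμ hd, Complex.ofReal_re, mul_assoc]

end subordination

/-- The scaling relation behind `σ LΨ = d Ψ + w · ∇Ψ`. -/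
lemma integral_exp_neg_mul_norm_rpow {d : ℕ} {σ t : ℝ} (hσ : 0 < σ) (ht : 0 < t) (w : Eu d) :
    ∫ ξ : Eu d, ((rexp (-(t * ‖ξ‖ ^ σ)) : ℝ) : ℂ) * Complex.exp (Complex.I * (⟪w, ξ⟫_ℝ : ℂ)) =
      (((t ^ (-σ⁻¹)) ^ d : ℝ) : ℂ) * ∫ ξ : Eu d, ((rexp (-‖ξ‖ ^ σ) : ℝ) : ℂ) *
        Complex.exp (Complex.I * (⟪t ^ (-σ⁻¹) • w, ξ⟫_ℝ : ℂ)) := by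
  have hR : 0 < t ^ σ⁻¹ := by positivity
  have h := Measure.integral_comp_smul (volume : Measure (Eu d))
    (fun ξ : Eu d => ((rexp (-‖ξ‖ ^ σ) : ℝ) : ℂ) *
        Complex.exp (Complex.I * (⟪t ^ (-σ⁻¹) • w, ξ⟫_ℝ : ℂ))) (t ^ σ⁻¹)
  rw [finrank_euclideanSpace, Fintype.card_fin, abs_of_pos (by positivity), ← inv_pow,
    ← rpow_neg ht.le, Complex.real_smul] at h
  rw [← h]
  refine integral_congr_ae (ae_of_all _ fun ξ => ?_)
  simp only
  rw [norm_smul, norm_eq_abs, abs_of_pos hR, mul_rpow hR.le (norm_nonneg _), ← rpow_mul ht.le,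
    inv_mul_cancel₀ hσ.ne', rpow_one, real_inner_smul_left, real_inner_smul_right, ← mul_assoc,
    ← rpow_add ht]
  simp

lemma hasDerivAt_integral_exp_neg_mul_norm_rpow {d : ℕ} (hd : 1 ≤ d) {σ : ℝ} (hσ : 0 < σ)
    (w : Eu d) :
    HasDerivAt (fun t : ℝ => ∫ ξ : Eu d, ((rexp (-(t * ‖ξ‖ ^ σ)) : ℝ) : ℂ) *
        Complex.exp (Complex.I * (⟪w, ξ⟫_ℝ : ℂ)))
      (∫ ξ : Eu d, -(((‖ξ‖ ^ σ * rexp (-‖ξ‖ ^ σ) : ℝ) : ℂ) *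
        Complex.exp (Complex.I * (⟪w, ξ⟫_ℝ : ℂ)))) 1 := by
  have hn : ∀ ξ : Eu d, ‖Complex.exp (Complex.I * (⟪w, ξ⟫_ℝ : ℂ))‖ = 1 := fun ξ => by
    rw [mul_comm, Complex.norm_exp_ofReal_mul_I]
  have key := hasDerivAt_integral_of_dominated_loc_of_deriv_le (μ := (volume : Measure (Eu d)))
    (F := fun (t : ℝ) (ξ : Eu d) => ((rexp (-(t * ‖ξ‖ ^ σ)) : ℝ) : ℂ) *
        Complex.exp (Complex.I * (⟪w, ξ⟫_ℝ : ℂ)))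
    (F' := fun (t : ℝ) (ξ : Eu d) => -(((‖ξ‖ ^ σ * rexp (-(t * ‖ξ‖ ^ σ)) : ℝ) : ℂ) *
        Complex.exp (Complex.I * (⟪w, ξ⟫_ℝ : ℂ))))
    (bound := fun ξ => ‖ξ‖ ^ σ * rexp (-(1 / 2) * ‖ξ‖ ^ σ)) (x₀ := 1)
    (ball_mem_nhds (1 : ℝ) (ε := 1 / 2) (by norm_num))
    (Eventually.of_forall fun t => Measurable.aestronglyMeasurable (by fun_prop))
    ?_ (Measurable.aestronglyMeasurable (by fun_prop)) ?_
    (integrable_norm_rpow_mul_exp_neg hd hσ.le hσ (by norm_num)) ?_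
  · simpa using key.2
  · refine (integrable_exp_neg_norm_rpow hd hσ).mono'
      (Measurable.aestronglyMeasurable (by fun_prop)) (ae_of_all _ fun ξ => le_of_eq ?_)
    rw [norm_mul, hn, mul_one, Complex.norm_real, norm_eq_abs, abs_exp, one_mul]
  · refine ae_of_all _ fun ξ t ht => ?_
    have h0 : 0 ≤ ‖ξ‖ ^ σ := by positivity
    have ht' : 1 / 2 ≤ t := by
      rw [mem_ball, dist_eq_norm, norm_eq_abs, abs_lt] at ht
      linarith [ht.1]
    rw [norm_neg, norm_mul, hn, mul_one, Complex.norm_real, norm_eq_abs, abs_mul, abs_exp,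
      abs_of_nonneg h0]
    gcongr
    nlinarith
  · refine ae_of_all _ fun ξ t ht => ?_
    have h1 : HasDerivAt (fun t : ℝ => rexp (-(t * ‖ξ‖ ^ σ)))
        (rexp (-(t * ‖ξ‖ ^ σ)) * -(1 * ‖ξ‖ ^ σ)) t :=
      (((hasDerivAt_id t).mul_const _).neg).exp
    refine (h1.ofReal_comp.mul_const _).congr_deriv ?_
    push_cast
    ring

lemma lPsi_eq {d : ℕ} (hd : 1 ≤ d) {σ : ℝ} (hσ : 0 < σ) {w : Eu d}
    (hw : DifferentiableAt ℝ (Psi d σ) w) :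
    LPsi d σ w = σ⁻¹ * (d * Psi d σ w + fderiv ℝ (Psi d σ) w w) := by
  have h1 := Complex.reCLM.hasFDerivAt.comp_hasDerivAt (1 : ℝ)
    (hasDerivAt_integral_exp_neg_mul_norm_rpow hd hσ w)
  have h2 := h1.const_mul ((2 * π) ^ (-(d : ℝ)))
  have h3 : HasDerivAt (fun t : ℝ => t ^ (-σ⁻¹)) (-σ⁻¹) 1 := by
    simpa using hasDerivAt_rpow_const (x := 1) (p := -σ⁻¹) (Or.inl one_ne_zero)
  have h4 : HasDerivAt (fun t : ℝ => Psi d σ (t ^ (-σ⁻¹) • w))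
      (fderiv ℝ (Psi d σ) w (-σ⁻¹ • w)) 1 := by
    have h5 : HasFDerivAt (Psi d σ) (fderiv ℝ (Psi d σ) w) ((1 : ℝ) ^ (-σ⁻¹) • w) := by
      simpa using hw.hasFDerivAt
    exact h5.comp_hasDerivAt (1 : ℝ) (h3.smul_const w)
  have h5 := (h3.pow d).mul h4
  have h6 := h2.congr_of_eventuallyEq (f₁ := fun t : ℝ => (t ^ (-σ⁻¹)) ^ d *
      Psi d σ (t ^ (-σ⁻¹) • w)) (by
    filter_upwards [lt_mem_nhds (zero_lt_one (α := ℝ))] with t ht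
    simp only [Function.comp_apply]
    rw [integral_exp_neg_mul_norm_rpow hσ ht, Complex.reCLM_apply, Complex.re_ofReal_mul, Psi]
    ring)
  have h7 := h6.unique h5
  simp only [integral_neg, Complex.reCLM_apply, Complex.neg_re, one_rpow, one_pow, mul_one,
    one_smul, map_smul, smul_eq_mul, Pi.pow_apply, one_mul] at h7
  rw [LPsi]
  linear_combination -h7

/-- `f` is differentiable, and `|f|` and `‖∇f‖` are bounded by a multiple of `g`. -/
def DominatedBy {E : Type*} [NormedAddCommGroup E] [NormedSpace ℝ E] (f g : E → ℝ) : Prop :=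
  ∃ c, 0 ≤ c ∧ ∀ x, DifferentiableAt ℝ f x ∧ |f x| ≤ c * g x ∧ ‖fderiv ℝ f x‖ ≤ c * g x

namespace DominatedBy

variable {E F ι : Type*} [NormedAddCommGroup E] [NormedSpace ℝ E] [NormedAddCommGroup F]
  [NormedSpace ℝ F] {f f₁ f₂ g g₁ g₂ : E → ℝ}

lemma mul (h₁ : DominatedBy f₁ g₁) (h₂ : DominatedBy f₂ g₂) :
    DominatedBy (fun x => f₁ x * f₂ x) (fun x => g₁ x * g₂ x) := by
  obtain ⟨c₁, hc₁, h₁⟩ := h₁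
  obtain ⟨c₂, hc₂, h₂⟩ := h₂
  refine ⟨2 * (c₁ * c₂), by positivity, fun x => ?_⟩
  obtain ⟨d₁, a₁, b₁⟩ := h₁ x
  obtain ⟨d₂, a₂, b₂⟩ := h₂ x
  have hg₁ : 0 ≤ c₁ * g₁ x := (abs_nonneg _).trans a₁
  have hg₂ : 0 ≤ c₂ * g₂ x := (abs_nonneg _).trans a₂
  refine ⟨d₁.mul d₂, ?_, ?_⟩
  · calc |f₁ x * f₂ x| = |f₁ x| * |f₂ x| := abs_mul _ _
      _ ≤ (c₁ * g₁ x) * (c₂ * g₂ x) := by gcongr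
      _ ≤ 2 * (c₁ * c₂) * (g₁ x * g₂ x) := by nlinarith [mul_nonneg hg₁ hg₂]
  · rw [fderiv_fun_mul d₁ d₂]
    calc ‖f₁ x • fderiv ℝ f₂ x + f₂ x • fderiv ℝ f₁ x‖
        ≤ |f₁ x| * ‖fderiv ℝ f₂ x‖ + |f₂ x| * ‖fderiv ℝ f₁ x‖ := by
          refine (norm_add_le _ _).trans_eq ?_
          rw [norm_smul, norm_smul, norm_eq_abs, norm_eq_abs]
      _ ≤ (c₁ * g₁ x) * (c₂ * g₂ x) + (c₂ * g₂ x) * (c₁ * g₁ x) := by gcongr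
      _ = 2 * (c₁ * c₂) * (g₁ x * g₂ x) := by ring

lemma add (h₁ : DominatedBy f₁ g) (h₂ : DominatedBy f₂ g) :
    DominatedBy (fun x => f₁ x + f₂ x) g := by
  obtain ⟨c₁, hc₁, h₁⟩ := h₁
  obtain ⟨c₂, hc₂, h₂⟩ := h₂
  refine ⟨c₁ + c₂, by positivity, fun x => ?_⟩
  obtain ⟨d₁, a₁, b₁⟩ := h₁ x
  obtain ⟨d₂, a₂, b₂⟩ := h₂ x
  refine ⟨d₁.add d₂, ?_, ?_⟩
  · rw [add_mul]
    exact (abs_add_le _ _).trans (add_le_add a₁ a₂)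
  · rw [fderiv_fun_add d₁ d₂, add_mul]
    exact (norm_add_le _ _).trans (add_le_add b₁ b₂)

lemma prod (s : Finset ι) {f g : ι → E → ℝ} (h : ∀ i, DominatedBy (f i) (g i)) :
    DominatedBy (fun x => ∏ i ∈ s, f i x) (fun x => ∏ i ∈ s, g i x) := by
  classical
  induction s using Finset.induction_on with
  | empty => exact ⟨1, zero_le_one, fun x => by simp⟩
  | insert i s hi ih =>
    simp only [Finset.prod_insert hi]
    exact (h i).mul ih

lemma sum (s : Finset ι) {f : ι → E → ℝ} (h : ∀ i, DominatedBy (f i) g) :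
    DominatedBy (fun x => ∑ i ∈ s, f i x) g := by
  classical
  induction s using Finset.induction_on with
  | empty => exact ⟨0, le_rfl, fun x => by simp⟩
  | insert i s hi ih =>
    simp only [Finset.sum_insert hi]
    exact (h i).add ih

lemma comp_clm {f g : F → ℝ} (h : DominatedBy f g) (L : E →L[ℝ] F) :
    DominatedBy (fun x => f (L x)) (fun x => g (L x)) := by
  obtain ⟨c, hc, h⟩ := h
  refine ⟨c * (1 + ‖L‖), by positivity, fun x => ?_⟩
  obtain ⟨d, a, b⟩ := h (L x)
  have hg : 0 ≤ c * g (L x) := (abs_nonneg _).trans a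
  have hL := norm_nonneg L
  have hd := d.hasFDerivAt.comp x L.hasFDerivAt
  refine ⟨hd.differentiableAt, by nlinarith, ?_⟩
  have : fderiv ℝ (fun x => f (L x)) x = (fderiv ℝ f (L x)).comp L := hd.fderiv
  rw [this]
  refine (ContinuousLinearMap.opNorm_comp_le _ _).trans ?_
  nlinarith [mul_le_mul_of_nonneg_right b hL]

end DominatedBy

lemma psi_pos_and_dominatedBy {d : ℕ} (hd : 1 ≤ d) {σ : ℝ} (hσ0 : 0 < σ) (hσ2 : σ < 2) :
    (∀ w, 0 < Psi d σ w) ∧ DominatedBy (Psi d σ) (Psi d σ) ∧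
      DominatedBy (LPsi d σ) (Psi d σ) := by
  obtain ⟨μ, _, hpos, hμ⟩ := exists_stable_subordinator (α := σ / 2) (by linarith) (by linarith)
  set m : ℝ := (d : ℝ) / 2
  have hm : 0 ≤ m := by positivity
  have hI0 : Integrable (fun s => s ^ (-m)) μ := integrable_rpow_neg_half hσ0 hpos hμ hd
  have hI1 : Integrable (fun s => s ^ (-(m + 1))) μ := by
    have := integrable_rpow_neg_half hσ0 hpos hμ (d := d + 2) (by omega)
    convert this using 4
    push_cast
    ring
  have hI2 : Integrable (fun s => s ^ (-(m + 1 + 1))) μ := by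
    have := integrable_rpow_neg_half hσ0 hpos hμ (d := d + 4) (by omega)
    convert this using 4
    push_cast
    ring
  obtain ⟨C₁, hC₁, h₁⟩ := exists_heatMixture_add_le (by linarith) (by linarith) hpos hμ hm 1 hI0
    (by simpa using hI1)
  obtain ⟨C₂, hC₂, h₂⟩ := exists_heatMixture_add_le (by linarith) (by linarith) hpos hμ hm 2 hI0
    (by convert hI2 using 4; push_cast; ring)
  have e2 : m + (2 : ℕ) = m + 1 + 1 := by push_cast; ring
  simp only [Nat.cast_one, pow_one] at h₁
  rw [e2] at h₂
  set a : ℝ := (2 * π) ^ (-(d : ℝ)) * π ^ m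
  have ha : 0 < a := by positivity
  have hψ : Psi d σ = fun w => a * heatMixture μ m (‖w‖ ^ 2) :=
    funext fun w => psi_eq hσ0 hpos hμ hd w
  clear_value a
  have hQ0 : ∀ w : Eu d, 0 < heatMixture μ m (‖w‖ ^ 2) := fun w =>
    heatMixture_pos hpos (by positivity) hI0
  have hQ1 : ∀ w : Eu d, 0 < heatMixture μ (m + 1) (‖w‖ ^ 2) := fun w =>
    heatMixture_pos hpos (by positivity) hI1
  have hQ2 : ∀ w : Eu d, 0 < heatMixture μ (m + 1 + 1) (‖w‖ ^ 2) := fun w =>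
    heatMixture_pos hpos (by positivity) hI2
  have hD0 : ∀ w : Eu d, HasFDerivAt (Psi d σ)
      (a • ((-(1 / 2) * heatMixture μ (m + 1) (‖w‖ ^ 2)) • innerSL ℝ w)) w := fun w => by
    rw [hψ]
    exact (hasFDerivAt_heatMixture hpos hI0 hI1 w).const_mul a
  have hL : LPsi d σ = fun w => a * σ⁻¹ * (d * heatMixture μ m (‖w‖ ^ 2) -
      1 / 2 * (‖w‖ ^ 2 * heatMixture μ (m + 1) (‖w‖ ^ 2))) := funext fun w => by
    rw [lPsi_eq hd hσ0 (hD0 w).differentiableAt, (hD0 w).fderiv, hψ]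
    simp only [smul_apply, innerSL_apply_apply,
      real_inner_self_eq_norm_sq, smul_eq_mul]
    ring
  have hD1 : ∀ w : Eu d, HasFDerivAt (LPsi d σ)
      ((a * σ⁻¹ * (-(d / 2) * heatMixture μ (m + 1) (‖w‖ ^ 2) - heatMixture μ (m + 1) (‖w‖ ^ 2)
        + 1 / 4 * (‖w‖ ^ 2 * heatMixture μ (m + 1 + 1) (‖w‖ ^ 2)))) • innerSL ℝ w) w := fun w => by
    rw [hL]
    have t0 := (hasFDerivAt_heatMixture hpos hI0 hI1 w).const_mul (d : ℝ)
    have t1 := ((hasStrictFDerivAt_norm_sq w).hasFDerivAt.mul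
      (hasFDerivAt_heatMixture hpos hI1 hI2 w)).const_mul (1 / 2 : ℝ)
    refine ((t0.sub t1).const_mul (a * σ⁻¹)).congr_fderiv ?_
    ext v
    simp
    ring
  have hn1 : ∀ w : Eu d, ‖w‖ ≤ 1 + ‖w‖ ^ 2 := fun w => by nlinarith [sq_nonneg (‖w‖ - 1)]
  have hn3 : ∀ w : Eu d, ‖w‖ ^ 2 * ‖w‖ ≤ 1 + (‖w‖ ^ 2) ^ 2 := fun w => by
    nlinarith [sq_nonneg (‖w‖ ^ 2 - ‖w‖), sq_nonneg (‖w‖ ^ 2 - 1), hn1 w, norm_nonneg w]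
  have B1 : ∀ w : Eu d, heatMixture μ (m + 1) (‖w‖ ^ 2) * ‖w‖ ≤
      C₁ * heatMixture μ m (‖w‖ ^ 2) := fun w => by
    nlinarith [h₁ (‖w‖ ^ 2) (by positivity), mul_le_mul_of_nonneg_left (hn1 w) (hQ1 w).le]
  have B2 : ∀ w : Eu d, ‖w‖ ^ 2 * heatMixture μ (m + 1) (‖w‖ ^ 2) ≤
      C₁ * heatMixture μ m (‖w‖ ^ 2) := fun w => by
    nlinarith [h₁ (‖w‖ ^ 2) (by positivity), hQ1 w]
  have B3 : ∀ w : Eu d, ‖w‖ ^ 2 * heatMixture μ (m + 1 + 1) (‖w‖ ^ 2) * ‖w‖ ≤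
      C₂ * heatMixture μ m (‖w‖ ^ 2) := fun w => by
    nlinarith [h₂ (‖w‖ ^ 2) (by positivity), mul_le_mul_of_nonneg_left (hn3 w) (hQ2 w).le]
  refine ⟨fun w => ?_, ⟨1 + C₁, by positivity, fun w => ⟨(hD0 w).differentiableAt, ?_, ?_⟩⟩,
    ⟨σ⁻¹ * (d + C₁ + (d / 2 + 1) * C₁ + C₂), by positivity, fun w =>
      ⟨(hD1 w).differentiableAt, ?_, ?_⟩⟩⟩
  · rw [hψ]
    exact mul_pos ha (hQ0 w)
  · rw [hψ, abs_of_pos (mul_pos ha (hQ0 w))]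
    nlinarith [mul_pos hC₁ (mul_pos ha (hQ0 w))]
  · rw [(hD0 w).fderiv, hψ, norm_smul, norm_smul, innerSL_apply_norm, norm_mul, norm_neg,
      norm_eq_abs, norm_eq_abs, norm_eq_abs, abs_of_pos ha, abs_of_pos (hQ1 w),
      abs_of_pos (by norm_num : (0 : ℝ) < 1 / 2)]
    calc a * (1 / 2 * heatMixture μ (m + 1) (‖w‖ ^ 2) * ‖w‖)
        = a * (1 / 2 * (heatMixture μ (m + 1) (‖w‖ ^ 2) * ‖w‖)) := by ring
      _ ≤ a * ((1 + C₁) * heatMixture μ m (‖w‖ ^ 2)) := by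
        refine mul_le_mul_of_nonneg_left ?_ ha.le
        nlinarith [B1 w, hQ1 w, norm_nonneg w, hQ0 w, mul_pos hC₁ (hQ0 w)]
      _ = (1 + C₁) * (a * heatMixture μ m (‖w‖ ^ 2)) := by ring
  · have p1 := mul_pos hC₁ (hQ0 w)
    have p2 := mul_pos hC₂ (hQ0 w)
    have p3 : 0 ≤ (d : ℝ) * heatMixture μ m (‖w‖ ^ 2) := mul_nonneg (Nat.cast_nonneg _) (hQ0 w).le
    have p4 : 0 ≤ (d : ℝ) * (C₁ * heatMixture μ m (‖w‖ ^ 2)) :=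
      mul_nonneg (Nat.cast_nonneg _) p1.le
    have p5 : 0 ≤ ‖w‖ ^ 2 * heatMixture μ (m + 1) (‖w‖ ^ 2) :=
      mul_nonneg (sq_nonneg _) (hQ1 w).le
    rw [hL, hψ, abs_mul, abs_of_pos (by positivity : 0 < a * σ⁻¹)]
    calc _ ≤ a * σ⁻¹ * ((d + C₁ + (d / 2 + 1) * C₁ + C₂) * heatMixture μ m (‖w‖ ^ 2)) := by
          gcongr
          rw [abs_le]
          constructor <;> linarith [B2 w]
      _ = _ := by ring
  · have p1 := mul_pos hC₁ (hQ0 w)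
    have p3 : 0 ≤ (d : ℝ) * heatMixture μ m (‖w‖ ^ 2) := mul_nonneg (Nat.cast_nonneg _) (hQ0 w).le
    have p5 : 0 ≤ ‖w‖ ^ 2 * heatMixture μ (m + 1 + 1) (‖w‖ ^ 2) :=
      mul_nonneg (sq_nonneg _) (hQ2 w).le
    have p6 := mul_nonneg p5 (norm_nonneg w)
    have p7 := mul_nonneg (hQ1 w).le (norm_nonneg w)
    have p8 := mul_le_mul_of_nonneg_left (B1 w) (Nat.cast_nonneg (α := ℝ) d)
    have p9 := mul_nonneg (Nat.cast_nonneg (α := ℝ) d) p7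
    rw [(hD1 w).fderiv, hψ, norm_smul, innerSL_apply_norm, norm_mul, norm_eq_abs,
      abs_of_pos (by positivity : 0 < a * σ⁻¹), norm_eq_abs, mul_assoc,
      ← abs_of_nonneg (norm_nonneg w), ← abs_mul, abs_of_nonneg (norm_nonneg w)]
    calc _ ≤ a * σ⁻¹ * ((d + C₁ + (d / 2 + 1) * C₁ + C₂) * heatMixture μ m (‖w‖ ^ 2)) := by
          gcongr
          rw [abs_le]
          constructor <;> nlinarith [B3 w, B1 w]
      _ = _ := by ring

/-- For the sum of lower-dimensional fractional Laplacians, the profile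
`Φ` is strictly positive and `|𝓛Φ|`, `|∇Φ|` and `|∇𝓛Φ|` are bounded by a multiple of `Φ`. -/
theorem stmt13 (M : ℕ) (hM : 1 ≤ M) (n : Fin M → ℕ) (hn : ∀ k, 1 ≤ n k)
    (N : ℕ) (hN : ∑ k, n k = N) (σ : ℝ) (hσ0 : 0 < σ) (hσ2 : σ < 2) :
    (∀ x : XSp n, 0 < PhiProd n σ x) ∧
    ∃ c > (0 : ℝ), ∀ x : XSp n,
      |LPhiProd n σ x| ≤ c * PhiProd n σ x ∧
      ‖fderiv ℝ (PhiProd n σ) x‖ ≤ c * PhiProd n σ x ∧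
      ‖fderiv ℝ (LPhiProd n σ) x‖ ≤ c * PhiProd n σ x := by
  have h := fun k => psi_pos_and_dominatedBy (hn k) hσ0 hσ2
  have hP : ∀ x : XSp n, 0 < PhiProd n σ x := fun x => Finset.prod_pos fun k _ => (h k).1 _
  have hψ : ∀ k, DominatedBy (fun x : XSp n => Psi (n k) σ (x k))
      (fun x : XSp n => Psi (n k) σ (x k)) := fun k =>
    (h k).2.1.comp_clm (PiLp.proj 2 (fun k => Eu (n k)) k : XSp n →L[ℝ] Eu (n k))
  have hL : ∀ k, DominatedBy (fun x : XSp n => LPsi (n k) σ (x k))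
      (fun x : XSp n => Psi (n k) σ (x k)) := fun k =>
    (h k).2.2.comp_clm (PiLp.proj 2 (fun k => Eu (n k)) k : XSp n →L[ℝ] Eu (n k))
  have h1 : DominatedBy (PhiProd n σ) (PhiProd n σ) := DominatedBy.prod Finset.univ hψ
  have h2 : DominatedBy (LPhiProd n σ) (PhiProd n σ) := by
    refine DominatedBy.sum Finset.univ fun k => ?_
    have h3 := (hL k).mul (DominatedBy.prod (Finset.univ.erase k) hψ)
    have h4 : PhiProd n σ = fun x => Psi (n k) σ (x k) *
        ∏ i ∈ Finset.univ.erase k, Psi (n i) σ (x i) := funext fun x =>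
      (Finset.mul_prod_erase _ (fun i => Psi (n i) σ (x i)) (Finset.mem_univ k)).symm
    rwa [h4]
  obtain ⟨c₁, hc₁, h1⟩ := h1
  obtain ⟨c₂, hc₂, h2⟩ := h2
  have hle : ∀ {c y : ℝ} {x : XSp n}, y ≤ c * PhiProd n σ x → c ≤ c₁ + c₂ + 1 →
      y ≤ (c₁ + c₂ + 1) * PhiProd n σ x := fun hy hc =>
    hy.trans (mul_le_mul_of_nonneg_right hc (hP _).le)
  exact ⟨hP, c₁ + c₂ + 1, by positivity, fun x => ⟨hle (h2 x).2.1 (by linarith),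
    hle (h1 x).2.2 (by linarith), hle (h2 x).2.2 (by linarith)⟩⟩
end
end

section
/- There exists a constant c > 0 such that for every x = (x¹,…,x^M) ∈ ℝ^N, |∇Φ(x)|² ≤ c Σ_{j=1}^M (1 + |x^j|²)^{−1} Φ(x)². -/
open MeasureTheory Metric Real Set
open scoped InnerProductSpace ENNReal

noncomputable section

open Filter Topology
open scoped NNReal

/-- The smallest class of functions on `[0, ∞)` containing the exponentials `e^{-sλ}`, `s ≥ 0`,
and closed under sums, nonnegative multiples and bounded pointwise sequential limits. -/
inductive LaplaceCone : (ℝ≥0 → ℝ) → Prop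
  | exp (s : ℝ) (hs : 0 ≤ s) : LaplaceCone fun l => Real.exp (-(s * l))
  | add {f g : ℝ≥0 → ℝ} : LaplaceCone f → LaplaceCone g → LaplaceCone (f + g)
  | smul {f : ℝ≥0 → ℝ} (c : ℝ) (hc : 0 ≤ c) : LaplaceCone f → LaplaceCone (c • f)
  | lim {F : ℕ → ℝ≥0 → ℝ} {f : ℝ≥0 → ℝ} (C : ℝ) : (∀ k, LaplaceCone (F k)) →
      (∀ k l, |F k l| ≤ C) → (∀ l, Tendsto (fun k => F k l) atTop (𝓝 (f l))) → LaplaceCone f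

namespace LaplaceCone

lemma congr {f g : ℝ≥0 → ℝ} (hf : LaplaceCone f) (h : ∀ l, f l = g l) : LaplaceCone g :=
  (funext h : f = g) ▸ hf

lemma bounded {f : ℝ≥0 → ℝ} (hf : LaplaceCone f) : ∃ C, ∀ l, |f l| ≤ C := by
  induction hf with
  | exp s hs =>
    refine ⟨1, fun l => ?_⟩
    rw [abs_of_pos (Real.exp_pos _), Real.exp_le_one_iff]
    have : 0 ≤ s * l := by positivity
    linarith
  | add _ _ ihf ihg =>
    obtain ⟨C, hC⟩ := ihf
    obtain ⟨D, hD⟩ := ihg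
    exact ⟨C + D, fun l => (abs_add_le _ _).trans (add_le_add (hC l) (hD l))⟩
  | smul c hc _ ih =>
    obtain ⟨C, hC⟩ := ih
    refine ⟨c * C, fun l => ?_⟩
    rw [Pi.smul_apply, smul_eq_mul, abs_mul, abs_of_nonneg hc]
    exact mul_le_mul_of_nonneg_left (hC l) hc
  | lim C _ hb ht _ => exact ⟨C, fun l => le_of_tendsto' (ht l).abs fun k => hb k l⟩

lemma measurable {f : ℝ≥0 → ℝ} (hf : LaplaceCone f) : Measurable f := by
  induction hf with
  | exp s hs => fun_prop
  | add _ _ ihf ihg => exact ihf.add ihg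
  | smul c hc _ ih => exact ih.const_smul c
  | lim C _ hb ht ih => exact measurable_of_tendsto_metrizable ih (tendsto_pi_nhds.2 ht)

lemma exp_mul {g : ℝ≥0 → ℝ} (hg : LaplaceCone g) {s : ℝ} (hs : 0 ≤ s) :
    LaplaceCone (fun l => Real.exp (-(s * l)) * g l) := by
  induction hg with
  | exp t ht =>
    refine (exp (s + t) (add_nonneg hs ht)).congr fun l => ?_
    rw [← Real.exp_add]; ring_nf
  | add _ _ ihf ihg => exact (ihf.add ihg).congr fun l => by simp [mul_add]
  | smul c hc _ ih => exact (ih.smul c hc).congr fun l => by simp; ring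
  | lim C _ hb ht ih =>
    refine lim C ih (fun k l => ?_) (fun l => (ht l).const_mul _)
    rw [abs_mul, abs_of_pos (Real.exp_pos _)]
    have : Real.exp (-(s * l)) ≤ 1 := by
      rw [Real.exp_le_one_iff]
      have : 0 ≤ s * l := by positivity
      linarith
    exact (mul_le_of_le_one_left (abs_nonneg _) this).trans (hb k l)

lemma mul {f g : ℝ≥0 → ℝ} (hf : LaplaceCone f) (hg : LaplaceCone g) :
    LaplaceCone (fun l => f l * g l) := by
  induction hf with
  | exp s hs => exact hg.exp_mul hs
  | add _ _ ihf ihg => exact (ihf.add ihg).congr fun l => by simp [add_mul]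
  | smul c hc _ ih => exact (ih.smul c hc).congr fun l => by simp; ring
  | lim C _ hb ht ih =>
    obtain ⟨D, hD⟩ := hg.bounded
    refine lim (C * D) ih (fun k l => ?_) (fun l => (ht l).mul_const _)
    rw [abs_mul]
    exact mul_le_mul (hb k l) (hD l) (abs_nonneg _) ((abs_nonneg _).trans (hb k l))

lemma one : LaplaceCone (fun _ => 1) := (exp 0 le_rfl).congr fun l => by simp

lemma const {c : ℝ} (hc : 0 ≤ c) : LaplaceCone (fun _ => c) :=
  (one.smul c hc).congr fun l => by simp

lemma pow {f : ℝ≥0 → ℝ} (hf : LaplaceCone f) (k : ℕ) : LaplaceCone (fun l => f l ^ k) := by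
  induction k with
  | zero => exact one.congr fun l => by simp
  | succ k ih => exact (ih.mul hf).congr fun l => by rw [pow_succ]

lemma sum {ι : Type*} (s : Finset ι) {f : ι → ℝ≥0 → ℝ} (hf : ∀ i ∈ s, LaplaceCone (f i)) :
    LaplaceCone (fun l => ∑ i ∈ s, f i l) := by
  classical
  induction s using Finset.induction_on with
  | empty => exact (const le_rfl).congr fun l => by simp
  | insert a s ha ih =>
    refine ((hf a (by simp)).add (ih fun i hi => hf i (by simp [hi]))).congr fun l => ?_
    simp [Finset.sum_insert ha]

lemma prod {ι : Type*} (s : Finset ι) {f : ι → ℝ≥0 → ℝ} (hf : ∀ i ∈ s, LaplaceCone (f i)) :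
    LaplaceCone (fun l => ∏ i ∈ s, f i l) := by
  classical
  induction s using Finset.induction_on with
  | empty => exact one.congr fun l => by simp
  | insert a s ha ih =>
    refine ((hf a (by simp)).mul (ih fun i hi => hf i (by simp [hi]))).congr fun l => ?_
    simp [Finset.prod_insert ha]

lemma exp_comp {f : ℝ≥0 → ℝ} (hf : LaplaceCone f) : LaplaceCone (fun l => Real.exp (f l)) := by
  obtain ⟨C, hC⟩ := hf.bounded
  refine lim (F := fun k l => ∑ i ∈ Finset.range k, f l ^ i / i.factorial) (Real.exp C)
    (fun k => ?_) (fun k l => ?_) (fun l => ?_)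
  · refine sum _ fun i _ => ?_
    exact ((hf.pow i).smul (i.factorial : ℝ)⁻¹ (by positivity)).congr fun l => by
      simp; ring
  · refine (Finset.abs_sum_le_sum_abs _ _).trans ?_
    simp only [abs_div, abs_pow, Nat.abs_cast]
    exact (Real.sum_le_exp_of_nonneg (abs_nonneg _) k).trans (Real.exp_le_exp.2 (hC l))
  · have := NormedSpace.expSeries_div_hasSum_exp (f l)
    rw [← Real.exp_eq_exp_ℝ] at this
    exact this.tendsto_sum_nat

lemma inv_add {t : ℝ} (ht : 0 < t) : LaplaceCone (fun l => (t + l)⁻¹) := by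
  have key : ∀ (m : ℕ) (l : ℝ≥0), HasSum
      (fun k : ℕ => ((m : ℝ) + 1)⁻¹ * Real.exp (-((t + l) / (m + 1))) ^ (k + 1))
      (((m : ℝ) + 1)⁻¹ * (Real.exp ((t + l) / (m + 1)) - 1)⁻¹) := by
    intro m l
    have hx : 0 < (t + l) / ((m : ℝ) + 1) := by positivity
    have h1 : Real.exp (-((t + l) / ((m : ℝ) + 1))) < 1 := by
      rw [Real.exp_lt_one_iff]; linarith
    have h := ((hasSum_geometric_of_lt_one (Real.exp_pos _).le h1).mul_left
      (Real.exp (-((t + l) / ((m : ℝ) + 1))))).mul_left (((m : ℝ) + 1)⁻¹)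
    convert! h using 1
    · ext k; rw [pow_succ]; ring
    · rw [Real.exp_neg]
      have := (Real.one_lt_exp_iff.2 hx)
      have h2 : Real.exp ((t + l) / (m + 1)) - 1 ≠ 0 := by linarith
      congr 1
      field_simp
  have hb : ∀ (m : ℕ) (l : ℝ≥0),
      ((m : ℝ) + 1)⁻¹ * (Real.exp ((t + l) / (m + 1)) - 1)⁻¹ ≤ t⁻¹ := by
    intro m l
    rw [← mul_inv]
    refine inv_anti₀ ht ?_
    have h := Real.add_one_le_exp ((t + l) / ((m : ℝ) + 1))
    have h1 : ((m : ℝ) + 1) * ((t + l) / (m + 1)) = t + l := by field_simp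
    have h2 : ((m : ℝ) + 1) * ((t + l) / (m + 1)) ≤
      ((m : ℝ) + 1) * (Real.exp ((t + l) / (m + 1)) - 1) :=
      mul_le_mul_of_nonneg_left (by linarith) (by positivity)
    have := l.2
    change (0:ℝ) ≤ l at this
    linarith
  have hc : ∀ m : ℕ, LaplaceCone
      (fun l => ((m : ℝ) + 1)⁻¹ * (Real.exp ((t + l) / (m + 1)) - 1)⁻¹) := by
    intro m
    refine lim (F := fun n l => ∑ k ∈ Finset.range n,
      ((m : ℝ) + 1)⁻¹ * Real.exp (-((t + l) / (m + 1))) ^ (k + 1)) t⁻¹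
      (fun n => ?_) (fun n l => ?_) (fun l => (key m l).tendsto_sum_nat)
    · refine sum _ fun k _ => ?_
      have hm : (0 : ℝ) ≤ 1 / (m + 1) := by positivity
      refine ((((exp _ hm).smul (Real.exp (-(t / (m + 1)))) (Real.exp_pos _).le).pow (k + 1)).smul
        ((m : ℝ) + 1)⁻¹ (by positivity)).congr fun l => ?_
      simp only [Pi.smul_apply, smul_eq_mul]
      rw [← Real.exp_add]
      congr 3
      ring
    · rw [abs_of_nonneg (Finset.sum_nonneg fun k _ => by positivity)]
      exact (sum_le_hasSum _ (fun k _ => by positivity) (key m l)).trans (hb m l)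
  refine lim t⁻¹ hc (fun m l => ?_) fun l => ?_
  · have hx : 0 < (t + l) / ((m : ℝ) + 1) := by positivity
    rw [abs_of_nonneg]
    · exact hb m l
    · exact ((key m l).nonneg fun k => by positivity)
  · have h0 : (t + (l : ℝ)) ≠ 0 := by positivity
    have hd : HasDerivAt (fun x : ℝ => Real.exp ((t + l) * x)) (t + l) 0 := by
      simpa using ((hasDerivAt_id (0 : ℝ)).const_mul (t + (l : ℝ))).exp
    have hs := hd.tendsto_slope_zero
    have hu : Tendsto (fun m : ℕ => ((m : ℝ) + 1)⁻¹) atTop (𝓝[≠] 0) := by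
      refine tendsto_nhdsWithin_iff.2 ⟨?_, Filter.Eventually.of_forall fun m => ?_⟩
      · simpa using tendsto_one_div_add_atTop_nhds_zero_nat (𝕜 := ℝ)
      · exact (by positivity : ((m : ℝ) + 1)⁻¹ ≠ 0)
    refine ((hs.comp hu).inv₀ h0).congr fun m => ?_
    simp [div_eq_mul_inv]
    ring

lemma exp_neg_mul_div {t c : ℝ} (ht : 0 < t) (hc : 0 ≤ c) :
    LaplaceCone (fun l => Real.exp (-(c * (l / (t + l))))) := by
  refine ((((inv_add ht).smul (c * t) (by positivity)).exp_comp).smul (Real.exp (-c))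
    (Real.exp_pos _).le).congr fun l => ?_
  have h0 : (t + (l : ℝ)) ≠ 0 := by positivity
  simp only [Pi.smul_apply, smul_eq_mul]
  rw [← Real.exp_add]
  congr 1
  field_simp
  ring

lemma exp_neg_integral (ν : Measure ℝ) [IsFiniteMeasure ν] (hν : ∀ᵐ t ∂ν, 0 < t) {c : ℝ}
    (hc : 0 ≤ c) :
    LaplaceCone (fun l => Real.exp (-(c * ∫ t, (l / (t + l)) * (t + 1) ∂ν))) := by
  let S : ℕ → SimpleFunc ℝ ℝ := SimpleFunc.approxOn (fun t : ℝ => t) measurable_id (Ioi 0) 1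
    (by simp)
  have hS : ∀ k t, 0 < S k t := fun k t => SimpleFunc.approxOn_mem measurable_id _ k t
  have hlim : ∀ t, 0 < t → Tendsto (fun k => S k t) atTop (𝓝 t) := fun t ht =>
    SimpleFunc.tendsto_approxOn measurable_id _ (subset_closure ht)
  have hnn : ∀ (l : ℝ≥0) (t : ℝ), 0 < t → 0 ≤ (l / (t + l)) * (t + 1) := by
    intro l t ht
    positivity
  have hbd : ∀ (l : ℝ≥0) (t : ℝ), 0 < t → (l / (t + l)) * (t + 1) ≤ l + 1 := by
    intro l t ht
    rw [div_mul_eq_mul_div, div_le_iff₀ (by positivity)]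
    have : (0 : ℝ) ≤ l := l.2
    nlinarith [mul_nonneg this this]
  refine lim (F := fun k l => Real.exp (-(c * ∫ t, (l / (S k t + l)) * (S k t + 1) ∂ν))) 1
    (fun k => ?_) (fun k l => ?_) (fun l => ?_)
  · refine (prod (S k).range (f := fun v l =>
      Real.exp (-((c * ν.real (S k ⁻¹' {v}) * (v + 1)) * (l / (v + l))))) fun v hv => ?_).congr
      fun l => ?_
    · obtain ⟨t, rfl⟩ := SimpleFunc.mem_range.1 hv
      have := hS k t
      exact exp_neg_mul_div this (by positivity)
    · rw [← Real.exp_sum, Finset.sum_neg_distrib]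
      let φ : ℝ → ℝ := fun v => if v = 0 then 0 else (l / (v + l)) * (v + 1)
      have hφ : ∀ t, φ (S k t) = (l / (S k t + l)) * (S k t + 1) := fun t =>
        if_neg (hS k t).ne'
      have h := SimpleFunc.map_integral (μ := ν) (S k) φ
        (SimpleFunc.integrable_of_isFiniteMeasure _) (if_pos rfl)
      rw [SimpleFunc.integral_eq_integral _ (SimpleFunc.integrable_of_isFiniteMeasure _)] at h
      simp only [SimpleFunc.map_apply, hφ] at h
      rw [h, Finset.mul_sum]
      congr 2
      refine Finset.sum_congr rfl fun v hv => ?_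
      obtain ⟨t, rfl⟩ := SimpleFunc.mem_range.1 hv
      rw [hφ, smul_eq_mul]
      ring
  · rw [abs_of_pos (Real.exp_pos _), Real.exp_le_one_iff, neg_nonpos]
    exact mul_nonneg hc (integral_nonneg fun t => hnn l _ (hS k t))
  · refine (Real.continuous_exp.tendsto _).comp ((Tendsto.const_mul c ?_).neg)
    refine tendsto_integral_of_dominated_convergence (fun _ => (l : ℝ) + 1) (fun k => ?_)
      (integrable_const _) (fun k => ?_) ?_
    · have := (S k).measurable
      exact Measurable.aestronglyMeasurable (by fun_prop)
    · refine Filter.Eventually.of_forall fun t => ?_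
      rw [Real.norm_of_nonneg (hnn l _ (hS k t))]
      exact hbd l _ (hS k t)
    · filter_upwards [hν] with t ht
      have h0 : t + (l : ℝ) ≠ 0 := by positivity
      exact ((hlim t ht).add_const _).inv₀ h0 |>.const_mul _ |>.mul ((hlim t ht).add_const _)

lemma exp_neg_rpow {p : ℝ} (hp : p ∈ Ioo (0 : ℝ) 1) :
    LaplaceCone (fun l => Real.exp (-(l : ℝ) ^ p)) := by
  have hint := Real.integrableOn_rpowIntegrand₀₁_Ioi hp zero_le_one
  set ν := (volume.restrict (Ioi (0 : ℝ))).withDensity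
    (fun t => ENNReal.ofReal (Real.rpowIntegrand₀₁ p t 1)) with hν
  have hfin : IsFiniteMeasure ν := isFiniteMeasure_withDensity_ofReal hint.2
  have hpos : ∀ᵐ t ∂ν, 0 < t :=
    (withDensity_absolutelyContinuous _ _).ae_le (ae_restrict_mem measurableSet_Ioi)
  refine (exp_neg_integral ν hpos
    (inv_nonneg.2 (Real.integral_rpowIntegrand₀₁_one_pos hp).le)).congr fun l => ?_
  rw [Real.rpow_eq_const_mul_integral hp (NNReal.coe_nonneg l)]
  congr 3
  have hm : AEMeasurable (fun t => ENNReal.ofReal (Real.rpowIntegrand₀₁ p t 1))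
      (volume.restrict (Ioi (0 : ℝ))) := hint.1.aemeasurable.ennreal_ofReal
  rw [hν, integral_withDensity_eq_integral_toReal_smul₀ hm (by simp)]
  refine setIntegral_congr_fun measurableSet_Ioi fun t ht => ?_
  have ht' : (0 : ℝ) < t := ht
  have h0 : t + (l : ℝ) ≠ 0 := by positivity
  rw [ENNReal.toReal_ofReal (Real.rpowIntegrand₀₁_nonneg hp.1 ht'.le zero_le_one),
    Real.rpowIntegrand₀₁_eq_pow_div hp ht'.le zero_le_one,
    Real.rpowIntegrand₀₁_eq_pow_div hp ht'.le (NNReal.coe_nonneg l), smul_eq_mul]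
  field_simp

end LaplaceCone

section Functional

variable {X : Type*} [MeasurableSpace X] {μ : Measure X} {q : X → ℝ≥0} {k : X → ℝ}

lemma LaplaceCone.functional_nonneg_of_integrable {g : ℝ≥0 → ℝ} (hg : LaplaceCone g)
    (hq : Measurable q) (e : (ℝ≥0 → ℝ) →L[ℝ] ℝ) (h : ℝ≥0 → ℝ)
    (hk : Integrable (fun x => h (q x) * k x) μ)
    (hexp : ∀ s : ℝ, 0 ≤ s → 0 ≤ e (fun l => Real.exp (-(s * l)) * h l) +
      ∫ x, Real.exp (-(s * q x)) * (h (q x) * k x) ∂μ) :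
    0 ≤ e (fun l => g l * h l) + ∫ x, g (q x) * (h (q x) * k x) ∂μ := by
  have hi : ∀ {f : ℝ≥0 → ℝ}, LaplaceCone f →
      Integrable (fun x => f (q x) * (h (q x) * k x)) μ := by
    intro f hf
    obtain ⟨C, hC⟩ := hf.bounded
    exact hk.bdd_mul (hf.measurable.comp hq).aestronglyMeasurable
      (Filter.Eventually.of_forall fun x => hC (q x))
  induction hg with
  | exp s hs => exact hexp s hs
  | @add f g hf hg ihf ihg =>
    simp only [Pi.add_apply, add_mul]
    rw [integral_add (hi hf) (hi hg)]
    have : e (fun l => f l * h l + g l * h l) =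
      e (fun l => f l * h l) + e (fun l => g l * h l) := e.map_add _ _
    linarith
  | @smul f c hc hf ih =>
    simp only [Pi.smul_apply, smul_eq_mul, mul_assoc]
    rw [integral_const_mul]
    have : e (fun l => c * (f l * h l)) = c * e (fun l => f l * h l) := e.map_smul c _
    rw [this, ← mul_add]
    exact mul_nonneg hc ih
  | @lim F f C hF hb ht ih =>
    refine ge_of_tendsto' (x := atTop) (Tendsto.add ?_ ?_) ih
    · exact (e.continuous.tendsto _).comp (tendsto_pi_nhds.2 fun l => (ht l).mul_const _)
    · refine tendsto_integral_of_dominated_convergence (fun x => C * |h (q x) * k x|)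
        (fun n => (hi (hF n)).1) (hk.abs.const_mul C) (fun n => ?_) ?_
      · refine Filter.Eventually.of_forall fun x => ?_
        rw [norm_mul, Real.norm_eq_abs, Real.norm_eq_abs]
        exact mul_le_mul_of_nonneg_right (hb n _) (abs_nonneg _)
      · exact Filter.Eventually.of_forall fun x => (ht (q x)).mul_const _

/-- A linear functional which is nonnegative on all exponentials `e^{-sλ}` with `s > 0` is
nonnegative on the whole cone. -/
lemma LaplaceCone.functional_nonneg {g : ℝ≥0 → ℝ} (hg : LaplaceCone g)
    (hq : Measurable q) (e : (ℝ≥0 → ℝ) →L[ℝ] ℝ)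
    (hk : ∀ s : ℝ, 0 < s → Integrable (fun x => Real.exp (-(s * q x)) * k x) μ)
    (hgk : Integrable (fun x => g (q x) * k x) μ)
    (hexp : ∀ s : ℝ, 0 < s → 0 ≤ e (fun l => Real.exp (-(s * l))) +
      ∫ x, Real.exp (-(s * q x)) * k x ∂μ) :
    0 ≤ e g + ∫ x, g (q x) * k x ∂μ := by
  have hη : ∀ m : ℕ, (0 : ℝ) < ((m : ℝ) + 1)⁻¹ := fun m => by positivity
  have hη0 : Tendsto (fun m : ℕ => ((m : ℝ) + 1)⁻¹) atTop (𝓝 0) := by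
    simpa using tendsto_one_div_add_atTop_nhds_zero_nat (𝕜 := ℝ)
  have hη1 : ∀ l : ℝ≥0, Tendsto (fun m : ℕ => Real.exp (-(((m : ℝ) + 1)⁻¹ * l))) atTop (𝓝 1) := by
    intro l
    have := (Real.continuous_exp.tendsto _).comp ((hη0.mul_const (l : ℝ)).neg)
    simpa [Function.comp_def] using this
  have hle : ∀ (m : ℕ) (l : ℝ≥0), Real.exp (-(((m : ℝ) + 1)⁻¹ * l)) ≤ 1 := by
    intro m l
    rw [Real.exp_le_one_iff, neg_nonpos]
    positivity
  have key : ∀ m : ℕ, 0 ≤ e (fun l => g l * Real.exp (-(((m : ℝ) + 1)⁻¹ * l))) +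
      ∫ x, g (q x) * (Real.exp (-(((m : ℝ) + 1)⁻¹ * q x)) * k x) ∂μ := by
    intro m
    refine hg.functional_nonneg_of_integrable hq e (fun l => Real.exp (-(((m : ℝ) + 1)⁻¹ * l)))
      (hk _ (hη m)) fun s hs => ?_
    have := hexp (s + ((m : ℝ) + 1)⁻¹) (add_pos_of_nonneg_of_pos hs (hη m))
    simpa only [add_mul, neg_add, Real.exp_add, mul_assoc] using this
  refine ge_of_tendsto' (x := atTop) (Tendsto.add ?_ ?_) key
  · refine (e.continuous.tendsto _).comp (tendsto_pi_nhds.2 fun l => ?_)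
    simpa using (hη1 l).const_mul (g l)
  · refine tendsto_integral_of_dominated_convergence (fun x => |g (q x) * k x|)
      (fun m => ?_) hgk.abs (fun m => ?_) ?_
    · exact (hg.measurable.comp hq).aestronglyMeasurable.mul (hk _ (hη m)).1
    · refine Filter.Eventually.of_forall fun x => ?_
      rw [mul_left_comm, norm_mul, Real.norm_of_nonneg (Real.exp_pos _).le]
      exact mul_le_of_le_one_left (norm_nonneg _) (hle m _)
    · refine Filter.Eventually.of_forall fun x => ?_
      simpa using ((hη1 (q x)).mul_const (k x)).const_mul (g (q x))

end Functional

section FourierCos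

variable {n : ℕ}

lemma hasFDerivAt_integral_mul_cos {G : Eu n → ℝ} (hG : Integrable G)
    (hG1 : Integrable fun ξ => ‖ξ‖ * G ξ) (w : Eu n) :
    ∃ L : Eu n →L[ℝ] ℝ, HasFDerivAt (fun w => ∫ ξ, G ξ * Real.cos ⟪w, ξ⟫_ℝ) L w ∧
      ∀ v, L v = -∫ ξ, G ξ * (Real.sin ⟪w, ξ⟫_ℝ * ⟪v, ξ⟫_ℝ) := by
  have hcos : ∀ w : Eu n, AEStronglyMeasurable (fun ξ : Eu n => Real.cos ⟪w, ξ⟫_ℝ) volume :=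
    fun w => (by fun_prop : Continuous fun ξ : Eu n => Real.cos ⟪w, ξ⟫_ℝ).aestronglyMeasurable
  have hsin : AEStronglyMeasurable (fun ξ : Eu n => Real.sin ⟪w, ξ⟫_ℝ • innerSL ℝ ξ) volume :=
    (by fun_prop : Continuous fun ξ : Eu n => Real.sin ⟪w, ξ⟫_ℝ • innerSL ℝ ξ).aestronglyMeasurable
  have hbound : ∀ (w ξ : Eu n),
      ‖-(G ξ • Real.sin ⟪w, ξ⟫_ℝ • innerSL ℝ ξ)‖ ≤ ‖‖ξ‖ * G ξ‖ := by
    intro w ξ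
    rw [norm_neg, norm_smul, norm_smul, innerSL_apply_norm, norm_mul, norm_norm, mul_comm ‖ξ‖]
    refine mul_le_mul_of_nonneg_left (mul_le_of_le_one_left (norm_nonneg _) ?_) (norm_nonneg _)
    exact Real.abs_sin_le_one _
  have hmeas : AEStronglyMeasurable
      (fun ξ => -(G ξ • Real.sin ⟪w, ξ⟫_ℝ • innerSL ℝ ξ)) volume := (hG.1.smul hsin).neg
  have hint : Integrable (fun ξ => -(G ξ • Real.sin ⟪w, ξ⟫_ℝ • innerSL ℝ ξ)) :=
    hG1.norm.mono' hmeas (Filter.Eventually.of_forall (hbound w))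
  refine ⟨∫ ξ, -(G ξ • Real.sin ⟪w, ξ⟫_ℝ • innerSL ℝ ξ), ?_, fun v => ?_⟩
  · refine hasFDerivAt_integral_of_dominated_of_fderiv_le
      (F' := fun w ξ => -(G ξ • Real.sin ⟪w, ξ⟫_ℝ • innerSL ℝ ξ))
      (bound := fun ξ => ‖‖ξ‖ * G ξ‖) Filter.univ_mem
      (Filter.Eventually.of_forall fun w => hG.1.mul (hcos w))
      (hG.mul_bdd (c := 1) (hcos w) (Filter.Eventually.of_forall fun ξ => Real.abs_cos_le_one _))
      hmeas (Filter.Eventually.of_forall fun ξ w _ => hbound w ξ) hG1.norm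
      (Filter.Eventually.of_forall fun ξ w _ => ?_)
    have h1 : HasFDerivAt (fun w : Eu n => ⟪w, ξ⟫_ℝ) (innerSL ℝ ξ) w := by
      convert! (innerSL ℝ ξ).hasFDerivAt using 2 with y
      rw [innerSL_apply_apply, real_inner_comm]
    convert! (h1.cos.const_mul (G ξ)) using 1
    ext v
    simp
  · rw [ContinuousLinearMap.integral_apply hint v, ← integral_neg]
    refine integral_congr_ae (Filter.Eventually.of_forall fun ξ => ?_)
    simp [real_inner_comm]

lemma integral_gaussian_mul_cos {s : ℝ} (hs : 0 < s) (w : Eu n) :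
    ∫ ξ : Eu n, Real.exp (-(s * ‖ξ‖ ^ 2)) * Real.cos ⟪w, ξ⟫_ℝ =
      (π / s) ^ ((n : ℝ) / 2) * Real.exp (-(‖w‖ ^ 2 / (4 * s))) := by
  have hb : 0 < (s : ℂ).re := by simpa using hs
  have h := GaussianFourier.integral_cexp_neg_mul_sq_norm_add hb Complex.I w
  have hi := GaussianFourier.integrable_cexp_neg_mul_sq_norm_add hb Complex.I w
  have h2 := Complex.reCLM.integral_comp_comm hi
  rw [h] at h2
  have e1 : ∀ ξ : Eu n, Complex.reCLM
      (Complex.exp (-(s : ℂ) * (‖ξ‖ : ℂ) ^ 2 + Complex.I * (⟪w, ξ⟫_ℝ : ℂ))) =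
      Real.exp (-(s * ‖ξ‖ ^ 2)) * Real.cos ⟪w, ξ⟫_ℝ := by
    intro ξ
    rw [Complex.reCLM_apply, Complex.exp_re]
    congr 2
    · simp [← Complex.ofReal_pow, ← Complex.ofReal_mul]
    · simp [← Complex.ofReal_pow, ← Complex.ofReal_mul]
  simp only [e1] at h2
  rw [h2]
  have e2 : ((π : ℂ) / s) ^ ((Module.finrank ℝ (Eu n) : ℂ) / 2) *
      Complex.exp (Complex.I ^ 2 * (‖w‖ : ℂ) ^ 2 / (4 * s)) =
      (((π / s) ^ ((n : ℝ) / 2) * Real.exp (-(‖w‖ ^ 2 / (4 * s))) : ℝ) : ℂ) := by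
    rw [finrank_euclideanSpace_fin, Complex.ofReal_mul,
      Complex.ofReal_cpow (div_pos pi_pos hs).le]
    push_cast
    rw [Complex.I_sq]
    congr 2
    ring
  rw [e2, Complex.reCLM_apply, Complex.ofReal_re]

lemma integrable_gaussian {s : ℝ} (hs : 0 < s) :
    Integrable fun ξ : Eu n => Real.exp (-(s * ‖ξ‖ ^ 2)) := by
  have hb : 0 < (s : ℂ).re := by simpa using hs
  have hi := (GaussianFourier.integrable_cexp_neg_mul_sq_norm_add hb 0 (0 : Eu n)).norm
  refine hi.congr (Filter.Eventually.of_forall fun ξ => ?_)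
  simp [Complex.norm_exp, ← Complex.ofReal_pow, ← Complex.ofReal_mul]

lemma integrable_norm_mul_gaussian {s : ℝ} (hs : 0 < s) :
    Integrable fun ξ : Eu n => ‖ξ‖ * Real.exp (-(s * ‖ξ‖ ^ 2)) := by
  refine ((integrable_gaussian (n := n) (half_pos hs)).const_mul (1 + (s / 2)⁻¹)).mono'
    (by fun_prop) (Filter.Eventually.of_forall fun ξ => ?_)
  rw [Real.norm_of_nonneg (by positivity)]
  have h1 : Real.exp (-(s * ‖ξ‖ ^ 2)) =
      Real.exp (-(s / 2 * ‖ξ‖ ^ 2)) * Real.exp (-(s / 2 * ‖ξ‖ ^ 2)) := by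
    rw [← Real.exp_add]; ring_nf
  rw [h1, ← mul_assoc]
  refine mul_le_mul_of_nonneg_right ?_ (Real.exp_pos _).le
  rw [Real.exp_neg, ← div_eq_mul_inv, div_le_iff₀ (Real.exp_pos _)]
  have h2 := Real.add_one_le_exp (s / 2 * ‖ξ‖ ^ 2)
  have h3 : 0 ≤ ‖ξ‖ := norm_nonneg ξ
  have h4 : (s / 2)⁻¹ * (s / 2) = 1 := inv_mul_cancel₀ (half_pos hs).ne'
  have h5 : 0 < (s / 2)⁻¹ := by positivity
  calc ‖ξ‖ ≤ (1 + (s / 2)⁻¹) * (s / 2 * ‖ξ‖ ^ 2 + 1) := by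
        have : (1 + (s / 2)⁻¹) * (s / 2 * ‖ξ‖ ^ 2 + 1) =
          s / 2 * ‖ξ‖ ^ 2 + 1 + ((s / 2)⁻¹ * (s / 2)) * ‖ξ‖ ^ 2 + (s / 2)⁻¹ := by ring
        rw [this, h4]
        have : 0 ≤ s / 2 * ‖ξ‖ ^ 2 := by positivity
        nlinarith [sq_nonneg (‖ξ‖ - 1)]
    _ ≤ _ := mul_le_mul_of_nonneg_left h2 (by positivity)

lemma integral_gaussian_mul_sin {s : ℝ} (hs : 0 < s) (w v : Eu n) :
    ∫ ξ : Eu n, Real.exp (-(s * ‖ξ‖ ^ 2)) * (Real.sin ⟪w, ξ⟫_ℝ * ⟪v, ξ⟫_ℝ) =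
      ⟪w, v⟫_ℝ / (2 * s) * ((π / s) ^ ((n : ℝ) / 2) * Real.exp (-(‖w‖ ^ 2 / (4 * s)))) := by
  obtain ⟨L, hL, hLv⟩ := hasFDerivAt_integral_mul_cos (integrable_gaussian hs)
    (integrable_norm_mul_gaussian hs) w
  simp only [integral_gaussian_mul_cos hs] at hL
  have h1 : HasFDerivAt (fun w : Eu n => -(‖w‖ ^ 2 / (4 * s)))
      (-((4 * s)⁻¹ • (2 • innerSL ℝ w))) w := by
    have := ((hasStrictFDerivAt_norm_sq w).hasFDerivAt.const_mul (4 * s)⁻¹).neg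
    convert! this using 2 with y
    simp only [Pi.neg_apply, div_eq_inv_mul]
  have h2 := h1.exp.const_mul ((π / s) ^ ((n : ℝ) / 2))
  have h3 := DFunLike.congr_fun (hL.unique h2) v
  rw [hLv] at h3
  rw [neg_eq_iff_eq_neg.1 h3]
  simp
  field_simp
  ring

end FourierCos

section Profile

lemma half_le_one_sub_exp_neg {x : ℝ} (h0 : 0 ≤ x) (h1 : x ≤ 1) : x / 2 ≤ 1 - Real.exp (-x) := by
  have h : Real.exp (-x) ≤ (1 + x)⁻¹ := by
    rw [Real.exp_neg]
    exact inv_anti₀ (by linarith) (by linarith [Real.add_one_le_exp x])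
  have : (1 + x)⁻¹ ≤ 1 - x / 2 := by
    rw [inv_le_iff_one_le_mul₀ (by linarith)]
    nlinarith
  linarith

lemma one_sub_exp_neg_le (x : ℝ) : 1 - Real.exp (-x) ≤ x := by
  linarith [Real.add_one_le_exp (-x)]

lemma one_sub_exp_neg_le_one (x : ℝ) : 1 - Real.exp (-x) ≤ 1 := by
  linarith [Real.exp_pos (-x)]

lemma exists_lower_test {α : ℝ} (hα : α ∈ Ioo (0 : ℝ) 1) (n : ℕ) :
    ∃ (K δ : ℝ≥0) (c : ℝ), 0 < c ∧ 2 / (K : ℝ) * (K : ℝ) ^ α + 2 * (δ : ℝ) ^ α ≤ 1 / 4 ∧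
      ∀ u : ℝ, 0 < u → (1 - Real.exp (-u)) - 2 / (K : ℝ) * (1 - Real.exp (-(K * u))) -
        2 * (1 - Real.exp (-(δ * u))) ≤
          c * ((π / u) ^ ((n : ℝ) / 2) * Real.exp (-(1 / (4 * u)))) := by
  obtain ⟨hα0, hα1⟩ := hα
  set K : ℝ≥0 := (16 : ℝ≥0) ^ (1 / (1 - α)) with hK
  set δ : ℝ≥0 := (16 : ℝ≥0) ^ (-(1 / α)) with hδ
  have hK0 : (0 : ℝ) < K := by rw [hK]; exact NNReal.coe_pos.2 (NNReal.rpow_pos (by norm_num))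
  have hδ0 : (0 : ℝ) < δ := by rw [hδ]; exact NNReal.coe_pos.2 (NNReal.rpow_pos (by norm_num))
  have hKα : (K : ℝ) ^ α / K = 1 / 16 := by
    rw [← Real.rpow_sub_one hK0.ne', hK, NNReal.coe_rpow, ← Real.rpow_mul (by positivity)]
    have : 1 / (1 - α) * (α - 1) = -1 := by
      have : 1 - α ≠ 0 := by linarith
      field_simp; ring
    rw [this, Real.rpow_neg_one]; norm_num
  have hδα : (δ : ℝ) ^ α = 1 / 16 := by
    rw [hδ, NNReal.coe_rpow, ← Real.rpow_mul (by positivity)]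
    have : -(1 / α) * α = -1 := by field_simp
    rw [this, Real.rpow_neg_one]; norm_num
  have hD : 0 < (π * δ) ^ ((n : ℝ) / 2) * Real.exp (-(K / 4)) := by
    have := pi_pos
    positivity
  refine ⟨K, δ, ((π * δ) ^ ((n : ℝ) / 2) * Real.exp (-(K / 4)))⁻¹, inv_pos.2 hD, ?_, ?_⟩
  · rw [div_mul_eq_mul_div, mul_div_assoc, hKα, hδα]; norm_num
  · intro u hu
    have hr : 0 ≤ (π / u) ^ ((n : ℝ) / 2) * Real.exp (-(1 / (4 * u))) := by
      have := pi_pos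
      positivity
    have hKu : 0 ≤ 1 - Real.exp (-(K * u)) := by
      rw [sub_nonneg, Real.exp_le_one_iff, neg_nonpos]; positivity
    have hKu' : 0 ≤ 2 / (K : ℝ) * (1 - Real.exp (-(K * u))) := by positivity
    have hδu : 0 ≤ 1 - Real.exp (-(δ * u)) := by
      rw [sub_nonneg, Real.exp_le_one_iff, neg_nonpos]; positivity
    have hcr := mul_nonneg (inv_pos.2 hD).le hr
    rcases le_or_gt (K * u) 1 with h1 | h1
    · have h2 := half_le_one_sub_exp_neg (by positivity) h1
      have h3 : u ≤ 2 / (K : ℝ) * (1 - Real.exp (-(K * u))) := by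
        calc u = 2 / (K : ℝ) * (K * u / 2) := by field_simp
          _ ≤ _ := mul_le_mul_of_nonneg_left h2 (by positivity)
      linarith [one_sub_exp_neg_le u]
    rcases le_or_gt 1 (δ * u) with h2 | h2
    · have h3 : Real.exp (-(δ * u)) ≤ Real.exp (-1) := Real.exp_le_exp.2 (by linarith)
      have h4 := half_le_one_sub_exp_neg zero_le_one le_rfl
      linarith [one_sub_exp_neg_le_one u]
    · have h3 : (π * δ) ^ ((n : ℝ) / 2) * Real.exp (-(K / 4)) ≤
          (π / u) ^ ((n : ℝ) / 2) * Real.exp (-(1 / (4 * u))) := by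
        have hπ := pi_pos
        have h5 : π * δ ≤ π / u := by
          rw [le_div_iff₀ hu, mul_assoc]
          exact mul_le_of_le_one_right hπ.le h2.le
        have h6 : 1 / (4 * u) ≤ (K : ℝ) / 4 := by
          rw [div_le_div_iff₀ (by positivity) (by norm_num)]
          linarith
        exact mul_le_mul (Real.rpow_le_rpow (by positivity) h5 (by positivity))
          (Real.exp_le_exp.2 (neg_le_neg h6)) (Real.exp_pos _).le (by positivity)
      have h4 : 1 ≤ ((π * δ) ^ ((n : ℝ) / 2) * Real.exp (-(K / 4)))⁻¹ *
          ((π / u) ^ ((n : ℝ) / 2) * Real.exp (-(1 / (4 * u)))) := by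
        calc (1 : ℝ) = _ := (inv_mul_cancel₀ hD.ne').symm
          _ ≤ _ := mul_le_mul_of_nonneg_left h3 (inv_pos.2 hD).le
      linarith [one_sub_exp_neg_le_one u]

lemma exists_upper_test (n : ℕ) : ∃ C : ℝ, 0 < C ∧ ∀ u : ℝ, 0 < u →
    1 / (2 * u) * ((π / u) ^ ((n : ℝ) / 2) * Real.exp (-(1 / (4 * u)))) ≤
      C * (1 - Real.exp (-u)) := by
  refine ⟨16 ^ (n + 2) * (n + 2).factorial * Real.exp (1 / 4), by positivity, fun u hu => ?_⟩
  obtain ⟨y, hy, rfl⟩ : ∃ y : ℝ, 0 < y ∧ u = y⁻¹ := ⟨u⁻¹, by positivity, by simp⟩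
  have h1 : (1 + y)⁻¹ ≤ 1 - Real.exp (-y⁻¹) := by
    have h : Real.exp (-y⁻¹) ≤ (1 + y⁻¹)⁻¹ := by
      rw [Real.exp_neg]
      exact inv_anti₀ (by positivity) (by linarith [Real.add_one_le_exp y⁻¹])
    have : (1 + y⁻¹)⁻¹ = 1 - (1 + y)⁻¹ := by field_simp; ring
    linarith
  have h2 : (π / y⁻¹) ^ ((n : ℝ) / 2) ≤ (4 * (1 + y)) ^ n := by
    have hp := pi_pos
    calc (π / y⁻¹) ^ ((n : ℝ) / 2) ≤ (4 * (1 + y)) ^ ((n : ℝ) / 2) := by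
          refine Real.rpow_le_rpow (by positivity) ?_ (by positivity)
          rw [div_inv_eq_mul]
          nlinarith [pi_le_four]
      _ ≤ (4 * (1 + y)) ^ (n : ℝ) := by
          refine Real.rpow_le_rpow_of_exponent_le (by linarith) ?_
          have : (0 : ℝ) ≤ n := n.cast_nonneg
          linarith
      _ = _ := Real.rpow_natCast _ _
  have h3 : ((1 + y) / 4) ^ (n + 2) / (n + 2).factorial ≤ Real.exp ((1 + y) / 4) :=
    Real.pow_div_factorial_le_exp _ (by positivity) _
  rw [div_le_iff₀ (by positivity)] at h3
  have h4 : Real.exp ((1 + y) / 4) * Real.exp (-(1 / (4 * y⁻¹))) = Real.exp (1 / 4) := by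
    rw [← Real.exp_add]
    congr 1
    field_simp
    ring
  have h5 : (4 * (1 + y)) ^ (n + 2) * Real.exp (-(1 / (4 * y⁻¹))) ≤
      16 ^ (n + 2) * (n + 2).factorial * Real.exp (1 / 4) := by
    have : (4 * (1 + y)) ^ (n + 2) = 16 ^ (n + 2) * ((1 + y) / 4) ^ (n + 2) := by
      rw [← mul_pow]; ring_nf
    rw [this, ← h4]
    calc _ ≤ 16 ^ (n + 2) * (Real.exp ((1 + y) / 4) * (n + 2).factorial) *
          Real.exp (-(1 / (4 * y⁻¹))) := by gcongr
      _ = _ := by ring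
  calc 1 / (2 * y⁻¹) * ((π / y⁻¹) ^ ((n : ℝ) / 2) * Real.exp (-(1 / (4 * y⁻¹))))
      ≤ (16 * (1 + y)) * ((4 * (1 + y)) ^ n * Real.exp (-(1 / (4 * y⁻¹)))) := by
        gcongr
        rw [show 1 / (2 * y⁻¹) = y / 2 by field_simp]
        linarith
    _ = ((4 * (1 + y)) ^ (n + 2) * Real.exp (-(1 / (4 * y⁻¹)))) * (1 + y)⁻¹ := by
        field_simp
        ring
    _ ≤ _ := mul_le_mul h5 h1 (by positivity) (by positivity)

variable {n : ℕ} {σ : ℝ}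

lemma integrable_exp_neg_rpow (hn : 1 ≤ n) (hσ : 0 < σ) :
    Integrable fun ξ : Eu n => Real.exp (-‖ξ‖ ^ σ) := by
  have : NeZero n := ⟨by omega⟩
  rw [integrable_fun_norm_addHaar volume (f := fun r => Real.exp (-r ^ σ))]
  refine (integrableOn_rpow_mul_exp_neg_rpow (s := ((n - 1 : ℕ) : ℝ)) (p := σ)
    (by have : (0 : ℝ) ≤ ((n - 1 : ℕ) : ℝ) := Nat.cast_nonneg _
        linarith) hσ).congr_fun (fun r hr => ?_) measurableSet_Ioi
  simp [Real.rpow_natCast]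

lemma integrable_norm_mul_exp_neg_rpow (hn : 1 ≤ n) (hσ : 0 < σ) :
    Integrable fun ξ : Eu n => ‖ξ‖ * Real.exp (-‖ξ‖ ^ σ) := by
  have : NeZero n := ⟨by omega⟩
  rw [integrable_fun_norm_addHaar volume (f := fun r => r * Real.exp (-r ^ σ))]
  refine (integrableOn_rpow_mul_exp_neg_rpow (s := ((n - 1 + 1 : ℕ) : ℝ)) (p := σ)
    (by have : (0 : ℝ) ≤ ((n - 1 + 1 : ℕ) : ℝ) := Nat.cast_nonneg _
        linarith) hσ).congr_fun (fun r hr => ?_) measurableSet_Ioi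
  simp only [Real.rpow_natCast, finrank_euclideanSpace_fin, smul_eq_mul]
  ring

lemma coe_nnnorm_sq_rpow_half (ξ : Eu n) : ((‖ξ‖₊ ^ 2 : ℝ≥0) : ℝ) ^ (σ / 2) = ‖ξ‖ ^ σ := by
  rw [NNReal.coe_pow, coe_nnnorm, ← Real.rpow_natCast, ← Real.rpow_mul (norm_nonneg _)]
  congr 1
  push_cast
  ring

lemma scaling_gaussian {ρ s : ℝ} (hρ : 0 < ρ) (hs : 0 < s) :
    ρ ^ n * (π / s) ^ ((n : ℝ) / 2) = (π / (s * (ρ ^ 2)⁻¹)) ^ ((n : ℝ) / 2) := by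
  have h : π / (s * (ρ ^ 2)⁻¹) = ρ ^ 2 * (π / s) := by field_simp
  have h2 : (ρ ^ 2) ^ ((n : ℝ) / 2) = ρ ^ n := by
    rw [← Real.rpow_natCast, ← Real.rpow_mul hρ.le, ← Real.rpow_natCast]
    congr 1
    push_cast
    ring
  rw [h, Real.mul_rpow (by positivity) (div_pos pi_pos hs).le, h2]

lemma inv_sq_rpow_half {ρ : ℝ} (hρ : 0 < ρ) : ((ρ ^ 2)⁻¹) ^ (σ / 2) = ρ ^ (-σ) := by
  rw [← Real.rpow_natCast, ← Real.rpow_neg hρ.le, ← Real.rpow_mul hρ.le]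
  congr 1
  push_cast
  ring

lemma exists_lower_bound (hn : 1 ≤ n) (hσ0 : 0 < σ) (hσ2 : σ < 2) :
    ∃ c : ℝ, 0 < c ∧ ∀ ρ : ℝ, 1 ≤ ρ → ∀ w : Eu n, ‖w‖ ≤ ρ →
      c * ρ ^ (-σ) ≤ ρ ^ n * ∫ ξ : Eu n, Real.exp (-‖ξ‖ ^ σ) * Real.cos ⟪w, ξ⟫_ℝ := by
  have hα : σ / 2 ∈ Ioo (0 : ℝ) 1 := ⟨by linarith, by linarith⟩
  obtain ⟨K, δ, c, hc, hKδ, htest⟩ := exists_lower_test hα n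
  refine ⟨1 / (4 * c), by positivity, fun ρ hρ1 w hw => ?_⟩
  have hρ : 0 < ρ := by linarith
  let l : ℝ≥0 := ⟨(ρ ^ 2)⁻¹, by positivity⟩
  have hl : (l : ℝ) = (ρ ^ 2)⁻¹ := rfl
  let pr : ℝ≥0 → ((ℝ≥0 → ℝ) →L[ℝ] ℝ) := fun l => ContinuousLinearMap.proj l
  let e : (ℝ≥0 → ℝ) →L[ℝ] ℝ := (2 / (K : ℝ)) • (pr 0 - pr (K * l)) +
    (2 : ℝ) • (pr 0 - pr (δ * l)) - (pr 0 - pr l)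
  have he : ∀ f, e f = 2 / (K : ℝ) * (f 0 - f (K * l)) + 2 * (f 0 - f (δ * l)) - (f 0 - f l) :=
    fun f => rfl
  have hcos : AEStronglyMeasurable (fun ξ : Eu n => c * ρ ^ n * Real.cos ⟪w, ξ⟫_ℝ) volume :=
    (by fun_prop : Continuous fun ξ : Eu n =>
      c * ρ ^ n * Real.cos ⟪w, ξ⟫_ℝ).aestronglyMeasurable
  have hcosb : ∀ᵐ ξ : Eu n, ‖c * ρ ^ n * Real.cos ⟪w, ξ⟫_ℝ‖ ≤ c * ρ ^ n := by
    refine Filter.Eventually.of_forall fun ξ => ?_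
    rw [norm_mul, Real.norm_of_nonneg (by positivity)]
    exact mul_le_of_le_one_right (by positivity) (Real.abs_cos_le_one _)
  have main := (LaplaceCone.exp_neg_rpow hα).functional_nonneg (μ := (volume : Measure (Eu n)))
    (q := fun ξ => ‖ξ‖₊ ^ 2) (k := fun ξ => c * ρ ^ n * Real.cos ⟪w, ξ⟫_ℝ) (by fun_prop) e
    (fun s hs => by
      simpa only [NNReal.coe_pow, coe_nnnorm] using (integrable_gaussian hs).mul_bdd hcos hcosb)
    (by
      simp only [coe_nnnorm_sq_rpow_half]
      exact (integrable_exp_neg_rpow hn hσ0).mul_bdd hcos hcosb)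
    (fun s hs => by
      have h1 := htest (s * l) (by rw [hl]; positivity)
      have h2 : Real.exp (-(1 / (4 * (s * (l : ℝ))))) ≤ Real.exp (-(‖w‖ ^ 2 / (4 * s))) := by
        rw [Real.exp_le_exp, neg_le_neg_iff, hl,
          show 1 / (4 * (s * (ρ ^ 2)⁻¹)) = ρ ^ 2 / (4 * s) by field_simp]
        gcongr
      have h3 : ∫ ξ : Eu n, Real.exp (-(s * ((‖ξ‖₊ ^ 2 : ℝ≥0) : ℝ))) *
          (c * ρ ^ n * Real.cos ⟪w, ξ⟫_ℝ) = c * ((π / (s * (l : ℝ))) ^ ((n : ℝ) / 2) *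
            Real.exp (-(‖w‖ ^ 2 / (4 * s)))) := by
        rw [hl, ← scaling_gaussian hρ hs, mul_assoc (ρ ^ n), ← integral_gaussian_mul_cos hs,
          ← mul_assoc c, ← integral_const_mul]
        refine integral_congr_ae (Filter.Eventually.of_forall fun ξ => ?_)
        simp only [NNReal.coe_pow, coe_nnnorm]
        ring
      rw [h3, he]
      have h4 : c * ((π / (s * (l : ℝ))) ^ ((n : ℝ) / 2) * Real.exp (-(1 / (4 * (s * (l : ℝ)))))) ≤
          c * ((π / (s * (l : ℝ))) ^ ((n : ℝ) / 2) * Real.exp (-(‖w‖ ^ 2 / (4 * s)))) := by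
        have := pi_pos
        gcongr
      simp only [NNReal.coe_zero, mul_zero, neg_zero, Real.exp_zero, NNReal.coe_mul]
      simp only [mul_left_comm s] at *
      linarith)
  have hI : ∫ ξ : Eu n, Real.exp (-((‖ξ‖₊ ^ 2 : ℝ≥0) : ℝ) ^ (σ / 2)) *
      (c * ρ ^ n * Real.cos ⟪w, ξ⟫_ℝ) =
      c * (ρ ^ n * ∫ ξ : Eu n, Real.exp (-‖ξ‖ ^ σ) * Real.cos ⟪w, ξ⟫_ℝ) := by
    rw [← mul_assoc, ← integral_const_mul]
    refine integral_congr_ae (Filter.Eventually.of_forall fun ξ => ?_)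
    simp only [coe_nnnorm_sq_rpow_half]
    ring
  rw [hI, he] at main
  simp only [NNReal.coe_zero, NNReal.coe_mul, Real.zero_rpow hα.1.ne', neg_zero,
    Real.exp_zero, Real.mul_rpow (NNReal.coe_nonneg _) (NNReal.coe_nonneg l)] at main
  have hlσ : (l : ℝ) ^ (σ / 2) = ρ ^ (-σ) := inv_sq_rpow_half hρ
  rw [hlσ] at main
  set t := ρ ^ (-σ)
  have ht0 : 0 ≤ t := Real.rpow_nonneg hρ.le _
  have ht1 : t ≤ 1 := Real.rpow_le_one_of_one_le_of_nonpos hρ1 (by linarith)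
  have b1 := half_le_one_sub_exp_neg ht0 ht1
  have b2 : 2 / (K : ℝ) * (1 - Real.exp (-((K : ℝ) ^ (σ / 2) * t))) ≤
      2 / (K : ℝ) * ((K : ℝ) ^ (σ / 2) * t) :=
    mul_le_mul_of_nonneg_left (one_sub_exp_neg_le _) (by positivity)
  have b3 := one_sub_exp_neg_le ((δ : ℝ) ^ (σ / 2) * t)
  have b4 := mul_le_mul_of_nonneg_right hKδ ht0
  rw [div_mul_eq_mul_div, one_mul, div_le_iff₀ (by positivity)]
  nlinarith

lemma exists_upper_bound (hn : 1 ≤ n) (hσ0 : 0 < σ) (hσ2 : σ < 2) :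
    ∃ C : ℝ, 0 < C ∧ ∀ w : Eu n, 0 < ‖w‖ → ∀ v : Eu n,
      ‖w‖ ^ (n + 1) * ∫ ξ : Eu n, Real.exp (-‖ξ‖ ^ σ) * (Real.sin ⟪w, ξ⟫_ℝ * ⟪v, ξ⟫_ℝ) ≤
        C * ‖w‖ ^ (-σ) * ‖v‖ := by
  have hα : σ / 2 ∈ Ioo (0 : ℝ) 1 := ⟨by linarith, by linarith⟩
  obtain ⟨C, hC, htest⟩ := exists_upper_test n
  refine ⟨C, hC, fun w hρ v => ?_⟩
  set ρ := ‖w‖ with hρw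
  let l : ℝ≥0 := ⟨(ρ ^ 2)⁻¹, by positivity⟩
  have hl : (l : ℝ) = (ρ ^ 2)⁻¹ := rfl
  let pr : ℝ≥0 → ((ℝ≥0 → ℝ) →L[ℝ] ℝ) := fun l => ContinuousLinearMap.proj l
  let e : (ℝ≥0 → ℝ) →L[ℝ] ℝ := (C * ‖v‖) • (pr 0 - pr l)
  have he : ∀ f, e f = C * ‖v‖ * (f 0 - f l) := fun f => rfl
  let k : Eu n → ℝ := fun ξ => -(ρ ^ (n + 1)) * (Real.sin ⟪w, ξ⟫_ℝ * ⟪v, ξ⟫_ℝ)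
  have hk : Continuous k := by fun_prop
  have hki : ∀ {G : Eu n → ℝ}, AEStronglyMeasurable G volume →
      Integrable (fun ξ => ‖ξ‖ * G ξ) → Integrable (fun ξ => G ξ * k ξ) := by
    intro G hG hG1
    refine (hG1.norm.const_mul (ρ ^ (n + 1) * ‖v‖)).mono' (hG.mul hk.aestronglyMeasurable)
      (Filter.Eventually.of_forall fun ξ => ?_)
    have h1 : |⟪v, ξ⟫_ℝ| ≤ ‖v‖ * ‖ξ‖ := abs_real_inner_le_norm v ξ
    have h2 := Real.abs_sin_le_one ⟪w, ξ⟫_ℝ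
    have h3 : |Real.sin ⟪w, ξ⟫_ℝ| * |⟪v, ξ⟫_ℝ| ≤ 1 * (‖v‖ * ‖ξ‖) :=
      mul_le_mul h2 h1 (abs_nonneg _) zero_le_one
    simp only [k, norm_mul, norm_neg, Real.norm_eq_abs, abs_pow, abs_norm]
    rw [abs_of_pos hρ]
    calc |G ξ| * (ρ ^ (n + 1) * (|Real.sin ⟪w, ξ⟫_ℝ| * |⟪v, ξ⟫_ℝ|))
        ≤ |G ξ| * (ρ ^ (n + 1) * (1 * (‖v‖ * ‖ξ‖))) := by gcongr
      _ = _ := by ring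
  have main := (LaplaceCone.exp_neg_rpow hα).functional_nonneg (μ := (volume : Measure (Eu n)))
    (q := fun ξ => ‖ξ‖₊ ^ 2) (k := k) (by fun_prop) e
    (fun s hs => by
      simpa only [NNReal.coe_pow, coe_nnnorm] using
        hki (integrable_gaussian hs).1 (integrable_norm_mul_gaussian hs))
    (by
      simp only [coe_nnnorm_sq_rpow_half]
      exact hki (integrable_exp_neg_rpow hn hσ0).1 (integrable_norm_mul_exp_neg_rpow hn hσ0))
    (fun s hs => by
      have h1 := htest (s * l) (by rw [hl]; positivity)
      have h3 : ∫ ξ : Eu n, Real.exp (-(s * ((‖ξ‖₊ ^ 2 : ℝ≥0) : ℝ))) * k ξ =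
          -(⟪w, v⟫_ℝ / ρ * (1 / (2 * (s * (l : ℝ))) * ((π / (s * (l : ℝ))) ^ ((n : ℝ) / 2) *
            Real.exp (-(1 / (4 * (s * (l : ℝ)))))))) := by
        have h4 : ∫ ξ : Eu n, Real.exp (-(s * ((‖ξ‖₊ ^ 2 : ℝ≥0) : ℝ))) * k ξ =
            -(ρ ^ (n + 1)) * ∫ ξ : Eu n, Real.exp (-(s * ‖ξ‖ ^ 2)) *
              (Real.sin ⟪w, ξ⟫_ℝ * ⟪v, ξ⟫_ℝ) := by
          rw [← integral_const_mul]
          refine integral_congr_ae (Filter.Eventually.of_forall fun ξ => ?_)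
          simp only [NNReal.coe_pow, coe_nnnorm, k]
          ring
        rw [h4, integral_gaussian_mul_sin hs, hl, ← scaling_gaussian hρ hs,
          show 1 / (4 * (s * (ρ ^ 2)⁻¹)) = ‖w‖ ^ 2 / (4 * s) by field_simp; rfl]
        field_simp
        ring
      rw [h3, he]
      have h5 : ⟪w, v⟫_ℝ / ρ ≤ ‖v‖ := by
        rw [div_le_iff₀ hρ, mul_comm]
        exact real_inner_le_norm w v
      have h6 : ⟪w, v⟫_ℝ / ρ * (1 / (2 * (s * (l : ℝ))) * ((π / (s * (l : ℝ))) ^ ((n : ℝ) / 2) *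
            Real.exp (-(1 / (4 * (s * (l : ℝ))))))) ≤ ‖v‖ * (C * (1 - Real.exp (-(s * l)))) := by
        have := pi_pos
        exact mul_le_mul h5 h1 (by rw [hl]; positivity) (norm_nonneg _)
      simp only [NNReal.coe_zero, mul_zero, neg_zero, Real.exp_zero]
      linarith)
  have hI : ∫ ξ : Eu n, Real.exp (-((‖ξ‖₊ ^ 2 : ℝ≥0) : ℝ) ^ (σ / 2)) * k ξ =
      -(ρ ^ (n + 1) * ∫ ξ : Eu n, Real.exp (-‖ξ‖ ^ σ) * (Real.sin ⟪w, ξ⟫_ℝ * ⟪v, ξ⟫_ℝ)) := by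
    rw [← neg_mul, ← integral_const_mul]
    refine integral_congr_ae (Filter.Eventually.of_forall fun ξ => ?_)
    simp only [coe_nnnorm_sq_rpow_half, k]
    ring
  rw [hI, he] at main
  have hlσ : (l : ℝ) ^ (σ / 2) = ρ ^ (-σ) := inv_sq_rpow_half hρ
  simp only [NNReal.coe_zero, Real.zero_rpow hα.1.ne', neg_zero, Real.exp_zero, hlσ] at main
  have b := mul_le_mul_of_nonneg_left (one_sub_exp_neg_le (ρ ^ (-σ)))
    (mul_nonneg hC.le (norm_nonneg v))
  linarith

lemma Psi_eq (hn : 1 ≤ n) (hσ : 0 < σ) (w : Eu n) :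
    Psi n σ w = (2 * π) ^ (-(n : ℝ)) * ∫ ξ : Eu n, Real.exp (-‖ξ‖ ^ σ) * Real.cos ⟪w, ξ⟫_ℝ := by
  have hint : Integrable fun ξ : Eu n => ((Real.exp (-‖ξ‖ ^ σ) : ℝ) : ℂ) *
      Complex.exp (Complex.I * (⟪w, ξ⟫_ℝ : ℂ)) := by
    refine (integrable_exp_neg_rpow hn hσ).ofReal.mul_bdd (c := 1)
      (by fun_prop : Continuous fun ξ : Eu n =>
        Complex.exp (Complex.I * (⟪w, ξ⟫_ℝ : ℂ))).aestronglyMeasurable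
      (Filter.Eventually.of_forall fun ξ => ?_)
    rw [mul_comm, Complex.norm_exp_ofReal_mul_I]
  rw [Psi, ← Complex.reCLM_apply, ← Complex.reCLM.integral_comp_comm hint]
  congr 1
  refine integral_congr_ae (Filter.Eventually.of_forall fun ξ => ?_)
  simp only [Complex.reCLM_apply]
  rw [Complex.re_ofReal_mul, mul_comm Complex.I, Complex.exp_ofReal_mul_I_re]

/-- `Ψ_n` is positive and differentiable, with `|∇Ψ_n(w)| ≤ C ⟨w⟩⁻¹ Ψ_n(w)`. -/
lemma exists_hasFDerivAt_Psi (hn : 1 ≤ n) (hσ0 : 0 < σ) (hσ2 : σ < 2) :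
    ∃ C : ℝ, 0 < C ∧ ∀ w : Eu n, ∃ L : Eu n →L[ℝ] ℝ, HasFDerivAt (Psi n σ) L w ∧
      0 < Psi n σ w ∧ ‖L‖ ^ 2 * (1 + ‖w‖ ^ 2) ≤ C * Psi n σ w ^ 2 := by
  obtain ⟨c, hc, hlow⟩ := exists_lower_bound hn hσ0 hσ2
  obtain ⟨C, hC, hupp⟩ := exists_upper_bound hn hσ0 hσ2
  have hA : 0 < (2 * π) ^ (-(n : ℝ)) := Real.rpow_pos_of_pos (by linarith [pi_pos]) _
  set A := (2 * π) ^ (-(n : ℝ)) with hAdef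
  have hG := integrable_exp_neg_rpow hn hσ0
  have hG1 := integrable_norm_mul_exp_neg_rpow hn hσ0
  set I := ∫ ξ : Eu n, ‖ξ‖ * Real.exp (-‖ξ‖ ^ σ)
  have hI : 0 ≤ I := integral_nonneg fun ξ => by positivity
  refine ⟨2 * (C / c) ^ 2 + 2 * (I / c) ^ 2, by positivity, fun w => ?_⟩
  obtain ⟨L, hL, hLv⟩ := hasFDerivAt_integral_mul_cos hG hG1 w
  have hPsi : Psi n σ = fun w => A * ∫ ξ : Eu n, Real.exp (-‖ξ‖ ^ σ) * Real.cos ⟪w, ξ⟫_ℝ :=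
    funext (Psi_eq hn hσ0)
  set D := ∫ ξ : Eu n, Real.exp (-‖ξ‖ ^ σ) * Real.cos ⟪w, ξ⟫_ℝ with hD
  suffices h : 0 < D ∧ ‖L‖ ^ 2 * (1 + ‖w‖ ^ 2) ≤ (2 * (C / c) ^ 2 + 2 * (I / c) ^ 2) * D ^ 2 by
    refine ⟨A • L, ?_, ?_, ?_⟩
    · rw [hPsi]; exact hL.const_mul A
    · rw [hPsi]; exact mul_pos hA h.1
    · have h2 := mul_le_mul_of_nonneg_left h.2 (sq_nonneg A)
      rw [hPsi, norm_smul, Real.norm_of_nonneg hA.le]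
      simp only [← hD]
      linarith
  have hpos : 0 < D := by
    have h1 := hlow (max 1 ‖w‖) (le_max_left _ _) w (le_max_right _ _)
    have h0 : 0 < max 1 ‖w‖ := lt_max_of_lt_left one_pos
    exact pos_of_mul_pos_right (lt_of_lt_of_le (by positivity) h1) (by positivity)
  refine ⟨hpos, ?_⟩
  rcases le_total ‖w‖ 1 with hw | hw
  · have h1 : c ≤ D := by simpa using hlow 1 le_rfl w hw
    have h2 : ‖L‖ ≤ I := by
      refine L.opNorm_le_bound hI fun v => ?_
      rw [hLv, norm_neg, mul_comm I, ← integral_const_mul]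
      refine norm_integral_le_of_norm_le (hG1.const_mul ‖v‖)
        (Filter.Eventually.of_forall fun ξ => ?_)
      have h3 : |Real.sin ⟪w, ξ⟫_ℝ| * |⟪v, ξ⟫_ℝ| ≤ 1 * (‖v‖ * ‖ξ‖) :=
        mul_le_mul (Real.abs_sin_le_one _) (abs_real_inner_le_norm v ξ) (abs_nonneg _) zero_le_one
      rw [norm_mul, norm_mul, Real.norm_of_nonneg (Real.exp_pos _).le]
      calc _ ≤ Real.exp (-‖ξ‖ ^ σ) * (1 * (‖v‖ * ‖ξ‖)) :=
            mul_le_mul_of_nonneg_left h3 (Real.exp_pos _).le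
        _ = _ := by ring
    have h3 : ‖L‖ ≤ I / c * D := by
      calc ‖L‖ ≤ I / c * c := by rw [div_mul_cancel₀ _ hc.ne']; exact h2
        _ ≤ _ := by gcongr
    have h4 : 1 + ‖w‖ ^ 2 ≤ 2 := by
      have := pow_le_one₀ (n := 2) (norm_nonneg w) hw
      linarith
    calc ‖L‖ ^ 2 * (1 + ‖w‖ ^ 2) ≤ (I / c * D) ^ 2 * 2 := by gcongr
      _ ≤ _ := by nlinarith [mul_nonneg (sq_nonneg (C / c)) (sq_nonneg D)]
  · have hw0 : 0 < ‖w‖ := by linarith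
    have h1 := hlow ‖w‖ hw w le_rfl
    rw [← hD] at h1
    have h2 : ∀ v, ‖w‖ * -L v ≤ C / c * D * ‖v‖ := by
      intro v
      have h3 := hupp w hw0 v
      rw [← neg_eq_iff_eq_neg.2 (hLv v)] at h3
      have h4 : C * ‖w‖ ^ (-σ) * ‖v‖ ≤ C / c * (‖w‖ ^ n * D) * ‖v‖ := by
        refine mul_le_mul_of_nonneg_right ?_ (norm_nonneg v)
        calc C * ‖w‖ ^ (-σ) = C / c * (c * ‖w‖ ^ (-σ)) := by field_simp
          _ ≤ _ := mul_le_mul_of_nonneg_left h1 (by positivity)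
      have h5 : ‖w‖ ^ n * (‖w‖ * -L v) ≤ ‖w‖ ^ n * (C / c * D * ‖v‖) := by
        rw [pow_succ] at h3
        linarith
      exact le_of_mul_le_mul_left h5 (by positivity)
    have h3 : ‖L‖ ≤ C / c * D / ‖w‖ := by
      refine L.opNorm_le_bound (by positivity) fun v => ?_
      have h4 := h2 v
      have h5 := h2 (-v)
      rw [map_neg, norm_neg] at h5
      rw [div_mul_eq_mul_div, le_div_iff₀ hw0, Real.norm_eq_abs, ← abs_norm w, ← abs_mul, abs_le]
      constructor <;> linarith
    have h4 : ‖L‖ * ‖w‖ ≤ C / c * D := (le_div_iff₀ hw0).1 h3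
    have h5 : 1 + ‖w‖ ^ 2 ≤ 2 * ‖w‖ ^ 2 := by
      have := one_le_pow₀ (n := 2) hw
      linarith
    calc ‖L‖ ^ 2 * (1 + ‖w‖ ^ 2) ≤ ‖L‖ ^ 2 * (2 * ‖w‖ ^ 2) := by gcongr
      _ = 2 * (‖L‖ * ‖w‖) ^ 2 := by ring
      _ ≤ 2 * (C / c * D) ^ 2 := by gcongr
      _ ≤ _ := by nlinarith [mul_nonneg (sq_nonneg (I / c)) (sq_nonneg D)]

end Profile

/-- Sharper gradient bound for the product profile:
`|∇Φ(x)|² ≤ c Σ_j (1+|x^j|²)^{−1} Φ(x)²`. -/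
theorem stmt19 (M : ℕ) (hM : 1 ≤ M) (n : Fin M → ℕ) (hn : ∀ k, 1 ≤ n k)
    (N : ℕ) (hN : ∑ k, n k = N) (σ : ℝ) (hσ0 : 0 < σ) (hσ2 : σ < 2) :
    ∃ c > (0 : ℝ), ∀ x : XSp n,
      ‖fderiv ℝ (PhiProd n σ) x‖ ^ 2 ≤
        c * (∑ j, (1 + ‖x j‖ ^ 2)⁻¹) * PhiProd n σ x ^ 2 := by
  choose C hC hPsi using fun k => exists_hasFDerivAt_Psi (hn k) hσ0 hσ2
  have hS : 0 ≤ ∑ k, C k := Finset.sum_nonneg fun k _ => (hC k).le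
  refine ⟨M * ∑ k, C k, ?_, fun x => ?_⟩
  · exact mul_pos (by exact_mod_cast hM)
      (Finset.sum_pos (fun k _ => hC k) ⟨⟨0, hM⟩, Finset.mem_univ _⟩)
  choose L hL hpos hbound using fun k => hPsi k (x k)
  let pr : ∀ k, XSp n →L[ℝ] Eu (n k) := fun k => PiLp.proj 2 (fun k => Eu (n k)) k
  have hpr : ∀ k, ‖pr k‖ ≤ 1 := fun k =>
    (pr k).opNorm_le_bound zero_le_one fun y => by
      rw [one_mul]; exact PiLp.norm_apply_le y k
  have hderiv : HasFDerivAt (PhiProd n σ)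
      (∑ k, (∏ i ∈ Finset.univ.erase k, Psi (n i) σ (x i)) • (L k).comp (pr k)) x :=
    HasFDerivAt.finsetProd fun k _ => HasFDerivAt.comp (f := pr k) x (hL k) (pr k).hasFDerivAt
  have hterm : ∀ k, ‖(∏ i ∈ Finset.univ.erase k, Psi (n i) σ (x i)) • (L k).comp (pr k)‖ ^ 2 ≤
      C k * (1 + ‖x k‖ ^ 2)⁻¹ * PhiProd n σ x ^ 2 := by
    intro k
    have hprod : PhiProd n σ x =
        Psi (n k) σ (x k) * ∏ i ∈ Finset.univ.erase k, Psi (n i) σ (x i) :=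
      (Finset.mul_prod_erase _ _ (Finset.mem_univ k)).symm
    set P := ∏ i ∈ Finset.univ.erase k, Psi (n i) σ (x i)
    have h1 : ‖(L k).comp (pr k)‖ ≤ ‖L k‖ :=
      ((L k).opNorm_comp_le (pr k)).trans (mul_le_of_le_one_right (norm_nonneg _) (hpr k))
    have h2 : ‖L k‖ ^ 2 ≤ C k * Psi (n k) σ (x k) ^ 2 * (1 + ‖x k‖ ^ 2)⁻¹ := by
      rw [← div_eq_mul_inv, le_div_iff₀ (by positivity)]
      exact hbound k
    rw [norm_smul, mul_pow, Real.norm_eq_abs, sq_abs, hprod]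
    calc P ^ 2 * ‖(L k).comp (pr k)‖ ^ 2
        ≤ P ^ 2 * (C k * Psi (n k) σ (x k) ^ 2 * (1 + ‖x k‖ ^ 2)⁻¹) := by
          refine mul_le_mul_of_nonneg_left (le_trans ?_ h2) (sq_nonneg P)
          gcongr
      _ = _ := by ring
  rw [hderiv.fderiv]
  calc _ ≤ (∑ k, ‖(∏ i ∈ Finset.univ.erase k, Psi (n i) σ (x i)) • (L k).comp (pr k)‖) ^ 2 := by
        gcongr
        exact norm_sum_le _ _
    _ ≤ M * ∑ k, ‖(∏ i ∈ Finset.univ.erase k, Psi (n i) σ (x i)) • (L k).comp (pr k)‖ ^ 2 := by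
        simpa using sq_sum_le_card_mul_sum_sq (s := Finset.univ)
          (f := fun k => ‖(∏ i ∈ Finset.univ.erase k, Psi (n i) σ (x i)) • (L k).comp (pr k)‖)
    _ ≤ M * ∑ k, (∑ j, C j) * ((1 + ‖x k‖ ^ 2)⁻¹ * PhiProd n σ x ^ 2) := by
        gcongr with k
        refine (hterm k).trans ?_
        rw [mul_assoc]
        gcongr
        exact Finset.single_le_sum (f := C) (fun j _ => (hC j).le) (Finset.mem_univ k)
    _ = _ := by
        rw [← Finset.mul_sum, ← Finset.sum_mul]
        ring
end
end
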